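/- arXiv:1110.6239 — 3 statements merged into one kernel-verified Lean document; each statement's English description precedes it below -/
import Mathlib

section
/- Let (A, m) be a noetherian local ring with maximal ideal m and infinite residue field k = A/m, let I_1, ..., I_s be ideals of A, let Σ be a finite set of prime ideals of A, and let M be a finitely generated A-module. If for some i ∈ {1, ..., s} the ideal I_i is contained in no prime ideal of Σ, then there exists a non-empty Zariski open subset U of the k-vector space I_i/mI_i such that for every element x ∈ I_i whose image x + mI_i lies in U: (a) x is not contained in any prime ideal of Σ, and (b) x is a Rees superficial element of (I_1, ..., I_s) with respect to M, i.e., xM ∩ I_1^{n_1}···I_i^{n_i}···I_s^{n_s}M = x I_1^{n_1}···I_i^{n_i−1}···I_s^{n_s}M for all sufficiently large n_i and all n_1, ..., n_{i−1}, n_{i+1}, ..., n_s ≥ 0. -/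
open IsLocalRing

section MixedMultDefs

variable (A : Type*) [CommRing A]

/-- The length of an `A`-module `M`, defined as the height of `⊤` in the lattice of
submodules of `M` (i.e. the supremum of lengths of chains of submodules). -/
noncomputable def modLength (M : Type*) [AddCommGroup M] [Module A M] : ℕ∞ :=
  Order.height (⊤ : Submodule A M)

/-- The length of a module as a natural number (`0` if the length is infinite). -/
noncomputable def lenNat (M : Type*) [AddCommGroup M] [Module A M] : ℕ :=
  (modLength A M).toNat

/-- The height of an ideal: the infimum of the heights of the prime ideals containing it. -/
noncomputable def idealHeight (I : Ideal A) : ℕ∞ :=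
  ⨅ (p : PrimeSpectrum A) (_ : I ≤ p.asIdeal), Order.height p

/-- The Krull dimension of a module `M`, i.e. the Krull dimension of `A / Ann_A M`. -/
noncomputable def modDim (M : Type*) [AddCommGroup M] [Module A M] : WithBot ℕ∞ :=
  ringKrullDim (A ⧸ Module.annihilator A M)

/-- `x` is a Rees superficial element of the family of ideals `I = (I 0, …, I (t-1))` with
respect to `M`, as an element of the ideal `I i`:  `x ∈ I i` and
`xM ∩ I_1^{n_1} ⋯ I_i^{n_i + 1} ⋯ I_t^{n_t} M = x I_1^{n_1} ⋯ I_i^{n_i} ⋯ I_t^{n_t} M`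
for all sufficiently large `n i` and arbitrary other exponents. -/
def IsReesSuperficial (M : Type*) [AddCommGroup M] [Module A M] {t : ℕ}
    (I : Fin t → Ideal A) (i : Fin t) (x : A) : Prop :=
  x ∈ I i ∧ ∃ N : ℕ, ∀ n : Fin t → ℕ, N ≤ n i →
    (Ideal.span {x} • (⊤ : Submodule A M)) ⊓
        ((∏ j, I j ^ (n j + if j = i then 1 else 0)) • (⊤ : Submodule A M)) =
      Ideal.span {x} • ((∏ j, I j ^ (n j)) • (⊤ : Submodule A M))

/-- `x 0, …, x (t-1)` is a Rees superficial sequence of the family `I` with respect to `M`,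
where the assignment `c` records to which ideal each element of the sequence belongs:
`x i` is a Rees superficial element of `I`, as an element of `I (c i)`, with respect to
`M / (x 0, …, x (i-1)) M`. -/
def IsReesSuperficialSeq (M : Type*) [AddCommGroup M] [Module A M] {t s : ℕ}
    (I : Fin s → Ideal A) (x : Fin t → A) (c : Fin t → Fin s) : Prop :=
  ∀ i : Fin t,
    IsReesSuperficial A
      (M ⧸ ((Ideal.span (x '' {j | (j : ℕ) < (i : ℕ)})) • (⊤ : Submodule A M)))
      I (c i) (x i)

/-- The assignment `c` has type `(k 0, …, k (s-1))`: for each `i`, exactly `k i` members of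
the sequence are assigned to the ideal indexed by `i`. -/
def OfTypeCount {t s : ℕ} (c : Fin t → Fin s) (k : Fin s → ℕ) : Prop :=
  ∀ i : Fin s, (Finset.univ.filter fun j => c j = i).card = k i

/-- The ideal generated by the members of the sequence `x` assigned (by `c`) to index `i`. -/
def jrIdeal {t s : ℕ} (x : Fin t → A) (c : Fin t → Fin s) (i : Fin s) : Ideal A :=
  Ideal.span (x '' {j | c j = i})

/-- The defining equation of a joint reduction:  all members of the sequence lie in their
assigned ideals, and `I_1^{n_1+1} ⋯ I_s^{n_s+1} M = Σ_i (𝔍_i) I_1^{n_1+1} ⋯ I_i^{n_i} ⋯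
I_s^{n_s+1} M` for all sufficiently large `n_1, …, n_s`, where `𝔍_i` consists of the
members of the sequence assigned to `I i`. -/
def IsJointReductionEq (M : Type*) [AddCommGroup M] [Module A M] {t s : ℕ}
    (I : Fin s → Ideal A) (x : Fin t → A) (c : Fin t → Fin s) : Prop :=
  (∀ j, x j ∈ I (c j)) ∧
  ∃ N : ℕ, ∀ n : Fin s → ℕ, (∀ i, N ≤ n i) →
    ((∏ i, I i ^ (n i + 1)) • (⊤ : Submodule A M)) =
      ∑ i : Fin s, jrIdeal A x c i •
        ((∏ j, I j ^ (n j + if j = i then 0 else 1)) • (⊤ : Submodule A M))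

/-- A joint reduction of the family `I` with respect to `M` of type `k`. -/
def IsJointReduction (M : Type*) [AddCommGroup M] [Module A M] {t s : ℕ}
    (I : Fin s → Ideal A) (x : Fin t → A) (c : Fin t → Fin s) (k : Fin s → ℕ) : Prop :=
  IsJointReductionEq A M I x c ∧ OfTypeCount c k

/-- `x 1, …, x d` is a system of parameters for `M`:  `d = dim M`, the `x j` lie in the
maximal ideal, and `M / (x 1, …, x d) M` has finite length. -/
def IsSOP [IsLocalRing A] (M : Type*) [AddCommGroup M] [Module A M] {d : ℕ}
    (x : Fin d → A) : Prop :=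
  modDim A M = (d : ℕ∞) ∧ (∀ j, x j ∈ maximalIdeal A) ∧
    IsFiniteLength A (M ⧸ ((Ideal.span (Set.range x)) • (⊤ : Submodule A M)))

/-- `e` is the Hilbert–Samuel multiplicity of the ideal `q` on the `d`-dimensional module
`M`: the function `n ↦ ℓ_A(M / q^n M)` is eventually given by a polynomial of degree at
most `d` with `n^d`-coefficient `e / d!`. -/
def IsHSMult (M : Type*) [AddCommGroup M] [Module A M] (q : Ideal A) (d : ℕ) (e : ℕ) :
    Prop :=
  ∃ P : Polynomial ℚ, P.natDegree ≤ d ∧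
    (∃ N : ℕ, ∀ n : ℕ, N ≤ n →
      IsFiniteLength A (M ⧸ (q ^ n • (⊤ : Submodule A M))) ∧
      (lenNat A (M ⧸ (q ^ n • (⊤ : Submodule A M))) : ℚ) = P.eval (n : ℚ)) ∧
    (e : ℚ) = P.coeff d * (Nat.factorial d : ℚ)

/-- The subquotient `J^{n_0} I_1^{n_1} ⋯ I_s^{n_s} M / J^{n_0+1} I_1^{n_1} ⋯ I_s^{n_s} M`. -/
abbrev mixedSub (M : Type*) [AddCommGroup M] [Module A M] {s : ℕ} (J : Ideal A)
    (I : Fin s → Ideal A) (n : Fin (s + 1) → ℕ) : Submodule A M :=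
  (J ^ (n 0) * ∏ i : Fin s, I i ^ (n i.succ)) • (⊤ : Submodule A M)

/-- continued -/
abbrev mixedPiece (M : Type*) [AddCommGroup M] [Module A M] {s : ℕ} (J : Ideal A)
    (I : Fin s → Ideal A) (n : Fin (s + 1) → ℕ) :=
  ↥(mixedSub A M J I n) ⧸
    (Submodule.comap (mixedSub A M J I n).subtype
      ((J ^ (n 0 + 1) * ∏ i : Fin s, I i ^ (n i.succ)) • (⊤ : Submodule A M)))

/-- `e` is the mixed multiplicity `e_A(J^{[k_0+1]}, I_1^{[k_1]}, …, I_s^{[k_s]}; M)`: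
the function `(n_0, …, n_s) ↦ ℓ_A(J^{n_0} I_1^{n_1} ⋯ I_s^{n_s} M / J^{n_0+1} I_1^{n_1}
⋯ I_s^{n_s} M)` is, for all sufficiently large `n_0, …, n_s`, given by a polynomial of
total degree at most `k_0 + k_1 + ⋯ + k_s` whose coefficient of
`n_0^{k_0} n_1^{k_1} ⋯ n_s^{k_s}` is `e / (k_0! k_1! ⋯ k_s!)`. -/
def IsMixedMult (M : Type*) [AddCommGroup M] [Module A M] {s : ℕ} (J : Ideal A)
    (I : Fin s → Ideal A) (k0 : ℕ) (k : Fin s → ℕ) (e : ℕ) : Prop :=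
  ∃ P : MvPolynomial (Fin (s + 1)) ℚ, P.totalDegree ≤ k0 + ∑ i, k i ∧
    (∃ N : ℕ, ∀ n : Fin (s + 1) → ℕ, (∀ i, N ≤ n i) →
      IsFiniteLength A (mixedPiece A M J I n) ∧
      (lenNat A (mixedPiece A M J I n) : ℚ) =
        MvPolynomial.eval (fun i => (n i : ℚ)) P) ∧
    (e : ℚ) = MvPolynomial.coeff (Finsupp.equivFunOnFinite.symm (Fin.cons k0 k)) P *
      ((Nat.factorial k0 * ∏ i, Nat.factorial (k i) : ℕ) : ℚ)

/-- `e` is the mixed multiplicity `e_A(I_1^{[k_1]}, …, I_s^{[k_s]}; M)` of a family of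
`m`-primary ideals: the function `(n_1, …, n_s) ↦ ℓ_A(M / I_1^{n_1} ⋯ I_s^{n_s} M)` is, for
all sufficiently large `n_1, …, n_s`, given by a polynomial of total degree at most
`k_1 + ⋯ + k_s` whose coefficient of `n_1^{k_1} ⋯ n_s^{k_s}` is `e / (k_1! ⋯ k_s!)`. -/
def IsMixedMultPrimary (M : Type*) [AddCommGroup M] [Module A M] {s : ℕ}
    (I : Fin s → Ideal A) (k : Fin s → ℕ) (e : ℕ) : Prop :=
  ∃ P : MvPolynomial (Fin s) ℚ, P.totalDegree ≤ ∑ i, k i ∧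
    (∃ N : ℕ, ∀ n : Fin s → ℕ, (∀ i, N ≤ n i) →
      IsFiniteLength A (M ⧸ ((∏ i, I i ^ (n i)) • (⊤ : Submodule A M))) ∧
      (lenNat A (M ⧸ ((∏ i, I i ^ (n i)) • (⊤ : Submodule A M))) : ℚ) =
        MvPolynomial.eval (fun i => (n i : ℚ)) P) ∧
    (e : ℚ) = MvPolynomial.coeff (Finsupp.equivFunOnFinite.symm k) P *
      ((∏ i, Nat.factorial (k i) : ℕ) : ℚ)

/-- The submodule `(0_M : I^∞) = ⋃_n (0_M : I^n)` of `M`. -/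
def satSub (M : Type*) [AddCommGroup M] [Module A M] (I : Ideal A) : Submodule A M :=
  ⨆ n : ℕ, Submodule.torsionBySet A M ((I ^ n : Ideal A) : Set A)

/-- A polynomial function on an `A`-module `V` with values in the residue field of `A`:
an element of the subalgebra of functions generated by the linear ones. -/
def IsPolyFun [IsLocalRing A] (V : Type*) [AddCommGroup V] [Module A V]
    (f : V → ResidueField A) : Prop :=
  f ∈ Algebra.adjoin A {g : V → ResidueField A | ∃ l : V →ₗ[A] ResidueField A, g = ⇑l}

/-- A Zariski open subset of an `A`-module `V` (for `V` a finite-dimensional vector space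
over the residue field, this is the usual Zariski topology): the complement of the common
zero locus of a set of polynomial functions. -/
def IsZariskiOpen [IsLocalRing A] (V : Type*) [AddCommGroup V] [Module A V]
    (U : Set V) : Prop :=
  ∃ S : Set (V → ResidueField A), (∀ f ∈ S, IsPolyFun A V f) ∧
    U = {v | ∃ f ∈ S, f v ≠ 0}

end MixedMultDefs

lemma rs_exists_functional {A : Type*} [CommRing A] [IsLocalRing A]
    {V : Type*} [AddCommGroup V] [Module A V] [Module.Finite A V]
    (W : Submodule A V) (hW : W ≠ ⊤) :
    ∃ l : (V ⧸ (maximalIdeal A • (⊤ : Submodule A V))) →ₗ[A] ResidueField A,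
      (∃ v, l v ≠ 0) ∧ ∀ w ∈ W, l (Submodule.Quotient.mk w) = 0 := by
  obtain ⟨W', hW', hle⟩ := (eq_top_or_exists_le_coatom W).resolve_left hW
  have hs : IsSimpleModule A (V ⧸ W') := isSimpleModule_iff_isCoatom.mpr hW'
  obtain ⟨J, hJ, ⟨e⟩⟩ := isSimpleModule_iff_quot_maximal.mp hs
  obtain rfl := IsLocalRing.eq_maximalIdeal hJ
  let l0 : V →ₗ[A] (A ⧸ maximalIdeal A) := e.toLinearMap ∘ₗ W'.mkQ
  have hker : maximalIdeal A • (⊤ : Submodule A V) ≤ LinearMap.ker l0 := by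
    rw [Submodule.smul_le]
    intro a ha v _
    rw [LinearMap.mem_ker, map_smul]
    obtain ⟨b, hb⟩ := Ideal.Quotient.mk_surjective (l0 v)
    rw [← hb, Algebra.smul_def, Ideal.Quotient.algebraMap_eq, ← map_mul]
    exact Ideal.Quotient.eq_zero_iff_mem.mpr (Ideal.mul_mem_right _ _ ha)
  refine ⟨(Submodule.liftQ _ l0 hker : _ →ₗ[A] (A ⧸ maximalIdeal A)), ?_, ?_⟩
  · obtain ⟨v, hv⟩ : ∃ v, v ∉ W' := by
      by_contra! h
      exact hW'.1 (eq_top_iff.mpr fun v _ => h v)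
    refine ⟨Submodule.Quotient.mk v, ?_⟩
    intro h
    have h2 : e (W'.mkQ v) = 0 := h
    rw [LinearEquiv.map_eq_zero_iff] at h2
    exact hv ((Submodule.Quotient.mk_eq_zero _).mp h2)
  · intro w hw
    change e (W'.mkQ w) = 0
    rw [LinearEquiv.map_eq_zero_iff]
    exact (Submodule.Quotient.mk_eq_zero _).mpr (hle hw)

lemma rs_exists_common {A : Type*} [CommRing A] [IsLocalRing A] [Infinite (ResidueField A)]
    {V : Type*} [AddCommGroup V] [Module A V] (S : Finset (V →ₗ[A] ResidueField A))
    (hS : ∀ l ∈ S, ∃ v, l v ≠ 0) : ∃ v, ∀ l ∈ S, l v ≠ 0 := by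
  classical
  induction S using Finset.induction_on with
  | empty => exact ⟨0, by simp⟩
  | insert l S hl ih =>
    obtain ⟨v, hv⟩ := ih fun l hl => hS l (Finset.mem_insert_of_mem hl)
    obtain ⟨w, hw⟩ := hS l (Finset.mem_insert_self _ _)
    obtain ⟨c, hc⟩ := Infinite.exists_notMem_finset
      ((insert l S).image fun l => - l v / l w)
    obtain ⟨a, rfl⟩ := IsLocalRing.residue_surjective c
    refine ⟨v + a • w, fun l' hl' h => ?_⟩
    rw [map_add, map_smul, Algebra.smul_def] at h
    by_cases h0 : l' w = 0
    · rcases Finset.mem_insert.mp hl' with rfl | h1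
      · exact hw h0
      · rw [h0, mul_zero, add_zero] at h
        exact hv _ h1 h
    · apply hc
      rw [Finset.mem_image]
      refine ⟨l', hl', ?_⟩
      rw [div_eq_iff h0]
      exact (eq_neg_of_add_eq_zero_right h).symm

lemma rs_open_avoid (A : Type*) [CommRing A] [IsLocalRing A] [Infinite (ResidueField A)]
    (V : Type*) [AddCommGroup V] [Module A V] [Module.Finite A V]
    (Ws : Set (Submodule A V)) (hfin : Ws.Finite) (hW : ∀ W ∈ Ws, W ≠ ⊤) :
    ∃ U : Set (V ⧸ (maximalIdeal A • (⊤ : Submodule A V))),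
      IsZariskiOpen A _ U ∧ U.Nonempty ∧
      ∀ x : V, Submodule.Quotient.mk x ∈ U → ∀ W ∈ Ws, x ∉ W := by
  classical
  choose! l hl0 hl using fun (W : Submodule A V) (h : W ≠ ⊤) => rs_exists_functional W h
  let S := hfin.toFinset.image l
  obtain ⟨v, hv⟩ := rs_exists_common S (by
    intro l' hl'
    obtain ⟨W, h, rfl⟩ := Finset.mem_image.mp hl'
    exact hl0 W (hW W (hfin.mem_toFinset.mp h)))
  let f : (V ⧸ (maximalIdeal A • (⊤ : Submodule A V))) → ResidueField A := ∏ l ∈ S, ⇑l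
  have hf : ∀ x, f x = ∏ l ∈ S, l x := fun x => Finset.prod_apply _ _ _
  refine ⟨{v | ∃ g ∈ ({f} : Set _), g v ≠ 0}, ⟨{f}, ?_, rfl⟩, ⟨v, f, rfl, ?_⟩, ?_⟩
  · rintro _ rfl
    exact Subalgebra.prod_mem _ fun l _ => Algebra.subset_adjoin ⟨l, rfl⟩
  · rw [hf]
    exact Finset.prod_ne_zero_iff.mpr hv
  · rintro x ⟨_, rfl, hx⟩ W hWW hxW
    rw [hf, Finset.prod_ne_zero_iff] at hx
    exact hx (l W) (Finset.mem_image_of_mem _ (hfin.mem_toFinset.mpr hWW))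
      (hl W (hW W hWW) x hxW)

lemma rs_ker_pow {R : Type*} [CommRing R] [IsNoetherianRing R]
    {F : Type*} [AddCommGroup F] [Module R F] [Module.Finite R F] (J : Ideal R) (t : R)
    (h : ∀ P ∈ associatedPrimes R F, t ∈ P → J ≤ P) :
    ∃ d : ℕ, ∀ f ∈ J ^ d • (⊤ : Submodule R F), t • f = 0 → f = 0 := by
  let K : Submodule R F := LinearMap.ker (LinearMap.lsmul R F t)
  have hKt : t ∈ Module.annihilator R K := by
    rw [Module.mem_annihilator]
    rintro ⟨m, hm⟩
    exact Subtype.ext hm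
  have hJ : J ≤ (Module.annihilator R K).radical := by
    rw [← Ideal.sInf_minimalPrimes]
    refine le_sInf fun P hP => ?_
    have hA := Module.associatedPrimes.minimalPrimes_annihilator_subset_associatedPrimes R K hP
    exact h P (associatedPrimes.subset_of_injective K.injective_subtype hA) (hP.1.2 hKt)
  obtain ⟨c, hc⟩ := Ideal.exists_pow_le_of_le_radical_of_fg hJ (IsNoetherian.noetherian J)
  obtain ⟨k, hk⟩ := J.exists_pow_inf_eq_pow_smul K
  refine ⟨k + c, fun f hf htf => ?_⟩
  have h1 : f ∈ J ^ (k + c) • (⊤ : Submodule R F) ⊓ K := ⟨hf, htf⟩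
  rw [hk _ (Nat.le_add_right _ _), Nat.add_sub_cancel_left] at h1
  have h2 : J ^ c • (J ^ k • (⊤ : Submodule R F) ⊓ K) ≤ ⊥ := by
    rw [Submodule.smul_le]
    rintro r hr m ⟨_, hm⟩
    have := Module.mem_annihilator.mp (hc hr) ⟨m, hm⟩
    exact congrArg Subtype.val this
  exact h2 h1

section ReesAux

open scoped TensorProduct

variable {A : Type*} [CommRing A] {s : ℕ} (I : Fin s → Ideal A)

/-- The product of the powers of the ideals. -/
def rsPow (n : Fin s →₀ ℕ) : Ideal A := ∏ j, I j ^ n j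

lemma rsPow_zero : rsPow I 0 = ⊤ := by simp [rsPow]

lemma rsPow_add (m n : Fin s →₀ ℕ) : rsPow I (m + n) = rsPow I m * rsPow I n := by
  simp [rsPow, pow_add, Finset.prod_mul_distrib]

lemma rsPow_single (j : Fin s) (c : ℕ) : rsPow I (Finsupp.single j c) = I j ^ c := by
  classical
  unfold rsPow
  rw [Finset.prod_eq_single j]
  · simp
  · intro b _ hb
    simp [Finsupp.single_eq_of_ne hb]
  · simp

lemma rsPow_anti {m n : Fin s →₀ ℕ} (h : m ≤ n) : rsPow I n ≤ rsPow I m := by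
  have h1 := rsPow_add I m (n - m)
  rw [add_tsub_cancel_of_le h] at h1
  rw [h1]
  exact Ideal.mul_le_left

/-- The multi-Rees algebra. -/
noncomputable def rsAlg : Subalgebra A (MvPolynomial (Fin s) A) :=
  Algebra.adjoin A {p | ∃ j, ∃ a ∈ I j, p = MvPolynomial.monomial (Finsupp.single j 1) a}

lemma rsAlg_fg [IsNoetherianRing A] : (rsAlg I).FG := by
  classical
  choose g hg using fun j => (IsNoetherian.noetherian (I j) : (I j).FG)
  let G : Finset (MvPolynomial (Fin s) A) :=
    Finset.univ.biUnion fun j => (g j).image (MvPolynomial.monomial (Finsupp.single j 1))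
  have : rsAlg I = Algebra.adjoin A (G : Set (MvPolynomial (Fin s) A)) := by
    apply le_antisymm
    · refine Algebra.adjoin_le ?_
      rintro _ ⟨j, a, ha, rfl⟩
      have hle : I j ≤ (Subalgebra.toSubmodule (Algebra.adjoin A
          (G : Set (MvPolynomial (Fin s) A)))).comap
          (MvPolynomial.monomial (Finsupp.single j 1)) := by
        rw [← hg j, Submodule.span_le]
        intro b hb
        refine Algebra.subset_adjoin ?_
        simp only [G, Finset.coe_biUnion, Set.mem_iUnion]
        exact ⟨j, by simp, Finset.mem_coe.mpr (Finset.mem_image_of_mem _ hb)⟩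
      exact hle ha
    · refine Algebra.adjoin_mono ?_
      intro p hp
      obtain ⟨j, _, hp⟩ := Finset.mem_biUnion.mp (Finset.mem_coe.mp hp)
      obtain ⟨a, ha, rfl⟩ := Finset.mem_image.mp hp
      exact ⟨j, a, by rw [← hg j]; exact Submodule.subset_span ha, rfl⟩
  rw [this]
  exact Subalgebra.fg_adjoin_finset _

lemma rsAlg_noeth [IsNoetherianRing A] : IsNoetherianRing (rsAlg I) := by
  have := (Subalgebra.fg_iff_finiteType _).mp (rsAlg_fg I)
  exact Algebra.FiniteType.isNoetherianRing A _

/-- The degree one map `x ↦ x t_i`. -/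
noncomputable def rsT (i : Fin s) : I i →ₗ[A] rsAlg I where
  toFun x := ⟨MvPolynomial.monomial (Finsupp.single i 1) (x : A),
    Algebra.subset_adjoin ⟨i, x, x.2, rfl⟩⟩
  map_add' x y := Subtype.ext (by simp)
  map_smul' a x := Subtype.ext (by simp [MvPolynomial.smul_monomial])

/-- The ideal generated by the degree one piece. -/
noncomputable def rsJ (i : Fin s) : Ideal (rsAlg I) := Ideal.span (Set.range (rsT I i))

lemma rs_mono_mem (i : Fin s) (n : Fin s →₀ ℕ) : ∀ a ∈ rsPow I n,
    ∃ r ∈ rsJ I i ^ n i, (r : MvPolynomial (Fin s) A) = MvPolynomial.monomial n a := by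
  have hadd : ∀ m n : Fin s →₀ ℕ,
      (∀ a ∈ rsPow I m, ∃ r ∈ rsJ I i ^ m i,
        (r : MvPolynomial (Fin s) A) = MvPolynomial.monomial m a) →
      (∀ a ∈ rsPow I n, ∃ r ∈ rsJ I i ^ n i,
        (r : MvPolynomial (Fin s) A) = MvPolynomial.monomial n a) →
      (∀ a ∈ rsPow I (m + n), ∃ r ∈ rsJ I i ^ (m + n) i,
        (r : MvPolynomial (Fin s) A) = MvPolynomial.monomial (m + n) a) := by
    intro m n hm hn a ha
    rw [rsPow_add] at ha
    refine Submodule.mul_induction_on ha ?_ ?_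
    · intro b hb c hc
      obtain ⟨r, hr, hr'⟩ := hm b hb
      obtain ⟨q, hq, hq'⟩ := hn c hc
      refine ⟨r * q, ?_, ?_⟩
      · rw [Finsupp.add_apply, pow_add]
        exact Ideal.mul_mem_mul hr hq
      · simp [hr', hq', MvPolynomial.monomial_mul]
    · rintro b c ⟨r, hr, hr'⟩ ⟨q, hq, hq'⟩
      exact ⟨r + q, add_mem hr hq, by simp [hr', hq']⟩
  have h0 : ∀ a ∈ rsPow I 0, ∃ r ∈ rsJ I i ^ (0 : Fin s →₀ ℕ) i,
        (r : MvPolynomial (Fin s) A) = MvPolynomial.monomial 0 a := by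
    intro a _
    exact ⟨algebraMap A _ a, by simp, rfl⟩
  induction n using Finsupp.induction_linear with
  | zero => exact h0
  | add m n hm hn => exact hadd m n hm hn
  | single j c =>
    induction c with
    | zero => simpa using h0
    | succ c ih =>
      rw [Finsupp.single_add]
      refine hadd _ _ ih ?_
      intro a ha
      rw [rsPow_single, pow_one] at ha
      refine ⟨rsT I j ⟨a, ha⟩, ?_, rfl⟩
      by_cases h : j = i
      · subst h
        rw [Finsupp.single_eq_same, pow_one]
        exact Ideal.subset_span ⟨_, rfl⟩
      · rw [Finsupp.single_eq_of_ne (Ne.symm h), pow_zero]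
        simp

variable (M : Type*) [AddCommGroup M] [Module A M]

/-- Coefficient maps on `A[t] ⊗ M`. -/
noncomputable def rsCf (n : Fin s →₀ ℕ) : (MvPolynomial (Fin s) A ⊗[A] M) →ₗ[A] M :=
  (TensorProduct.lid A M).toLinearMap ∘ₗ LinearMap.rTensor M (MvPolynomial.lcoeff A n)

lemma rsCf_tmul (n : Fin s →₀ ℕ) (p : MvPolynomial (Fin s) A) (m : M) :
    rsCf M n (p ⊗ₜ m) = MvPolynomial.coeff n p • m := by
  simp [rsCf]

lemma rsCf_mono_smul (k n : Fin s →₀ ℕ) (a : A) (e : MvPolynomial (Fin s) A ⊗[A] M) :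
    rsCf M n (MvPolynomial.monomial k a • e) =
      if k ≤ n then a • rsCf M (n - k) e else 0 := by
  induction e using TensorProduct.induction_on with
  | zero => simp
  | add x y hx hy =>
    rw [smul_add, map_add, hx, hy]
    split_ifs <;> simp
  | tmul p m =>
    rw [TensorProduct.smul_tmul', rsCf_tmul, rsCf_tmul, smul_eq_mul,
      MvPolynomial.coeff_monomial_mul']
    split_ifs <;> simp [mul_smul]

/-- The submodule of elements with coefficients in `I^(n + e_j) M`. -/
noncomputable def rsSub (j : Fin s) : Submodule (rsAlg I) (MvPolynomial (Fin s) A ⊗[A] M) where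
  carrier := {e | ∀ n, rsCf M n e ∈ rsPow I (n + Finsupp.single j 1) • (⊤ : Submodule A M)}
  zero_mem' := by intro n; simp
  add_mem' := by
    intro a b ha hb n
    rw [map_add]
    exact add_mem (ha n) (hb n)
  smul_mem' := by
    rintro ⟨r, hr⟩ e he
    change ∀ n, rsCf M n (r • e) ∈ _
    replace he : ∀ n, rsCf M n e ∈ rsPow I (n + Finsupp.single j 1) • (⊤ : Submodule A M) := he
    induction hr using Algebra.adjoin_induction generalizing e with
    | mem x hx =>
      obtain ⟨l, a, ha, rfl⟩ := hx
      intro n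
      rw [rsCf_mono_smul]
      split_ifs with h
      · have h1 : rsPow I (n + Finsupp.single j 1) =
            I l * rsPow I (n - Finsupp.single l 1 + Finsupp.single j 1) := by
          rw [← pow_one (I l), ← rsPow_single, ← rsPow_add, ← add_assoc,
            add_tsub_cancel_of_le h]
        rw [h1, Submodule.mul_smul]
        exact Submodule.smul_mem_smul ha (he _)
      · exact zero_mem _
    | algebraMap a =>
      intro n
      rw [algebraMap_smul, map_smul]
      exact Submodule.smul_mem _ _ (he n)
    | add x y hx hy h1 h2 =>
      intro n
      rw [add_smul, map_add]
      exact add_mem (h1 he n) (h2 he n)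
    | mul x y hx hy h1 h2 =>
      intro n
      rw [mul_smul]
      exact h1 (h2 he) n

/-- The Rees module. -/
noncomputable def rsMod : Submodule (rsAlg I) (MvPolynomial (Fin s) A ⊗[A] M) :=
  Submodule.span _ (Set.range fun m : M => (1 : MvPolynomial (Fin s) A) ⊗ₜ[A] m)

noncomputable instance rsModGroup : AddCommGroup (rsMod I M) :=
  Submodule.addCommGroup (rsMod I M)

noncomputable instance rsModModule : Module (rsAlg I) (rsMod I M) :=
  Submodule.module (rsMod I M)

noncomputable instance rsModSMul : SMul (rsAlg I) (rsMod I M) :=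
  (rsModModule I M).toSMul

lemma rsMod_fg [Module.Finite A M] : (rsMod I M).FG := by
  classical
  obtain ⟨g, hg⟩ := (Module.Finite.fg_top : (⊤ : Submodule A M).FG)
  refine ⟨g.image fun m => (1 : MvPolynomial (Fin s) A) ⊗ₜ[A] m, ?_⟩
  apply le_antisymm
  · refine Submodule.span_mono ?_
    intro e he
    obtain ⟨m, _, rfl⟩ := Finset.mem_image.mp (Finset.mem_coe.mp he)
    exact ⟨m, rfl⟩
  · refine Submodule.span_le.mpr ?_
    rintro _ ⟨m, rfl⟩
    have hm : m ∈ Submodule.span A (g : Set M) := hg ▸ Submodule.mem_top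
    change (1 : MvPolynomial (Fin s) A) ⊗ₜ[A] m ∈ _
    induction hm using Submodule.span_induction with
    | mem x hx => exact Submodule.subset_span (Finset.mem_coe.mpr (Finset.mem_image_of_mem _ hx))
    | zero => simp
    | add x y _ _ h1 h2 => rw [TensorProduct.tmul_add]; exact add_mem h1 h2
    | smul a x _ h =>
      rw [TensorProduct.tmul_smul, ← algebraMap_smul (rsAlg I) a]
      exact Submodule.smul_mem _ _ h

lemma rs_mem (i : Fin s) (n : Fin s →₀ ℕ) (y : M) (hy : y ∈ rsPow I n • (⊤ : Submodule A M)) :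
    MvPolynomial.monomial n (1 : A) ⊗ₜ[A] y ∈ rsJ I i ^ n i • rsMod I M := by
  induction hy using Submodule.smul_induction_on' with
  | smul a ha m _ =>
    obtain ⟨r, hr, hr'⟩ := rs_mono_mem I i n a ha
    have : MvPolynomial.monomial n (1 : A) ⊗ₜ[A] (a • m) =
        r • ((1 : MvPolynomial (Fin s) A) ⊗ₜ[A] m) := by
      rw [← TensorProduct.smul_tmul, Subalgebra.smul_def, hr', TensorProduct.smul_tmul',
        MvPolynomial.smul_monomial]
      simp
    rw [this]
    exact Submodule.smul_mem_smul hr (Submodule.subset_span ⟨m, rfl⟩)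
  | add x _ y _ h1 h2 => rw [TensorProduct.tmul_add]; exact add_mem h1 h2

lemma rs_mem_sub_iff (j : Fin s) (n : Fin s →₀ ℕ) (y : M) :
    MvPolynomial.monomial n (1 : A) ⊗ₜ[A] y ∈ rsSub I M j ↔
      y ∈ rsPow I (n + Finsupp.single j 1) • (⊤ : Submodule A M) := by
  classical
  change (∀ k, rsCf M k _ ∈ _) ↔ _
  constructor
  · intro h
    have := h n
    rwa [rsCf_tmul, MvPolynomial.coeff_monomial, if_pos rfl, one_smul] at this
  · intro h k
    rw [rsCf_tmul, MvPolynomial.coeff_monomial]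
    split_ifs with hk
    · subst hk; rwa [one_smul]
    · rw [zero_smul]; exact zero_mem _

/-- The associated graded module in direction `j`. -/
abbrev rsF (j : Fin s) := ↥(rsMod I M) ⧸ (rsSub I M j).comap (rsMod I M).subtype

noncomputable instance rsFGroup (j : Fin s) : AddCommGroup (rsF I M j) :=
  Submodule.Quotient.addCommGroup _

noncomputable instance rsFModule (j : Fin s) : Module (rsAlg I) (rsF I M j) :=
  Submodule.Quotient.module _

noncomputable instance rsFSMul (j : Fin s) : SMul (rsAlg I) (rsF I M j) :=
  (rsFModule I M j).toSMul

lemma rsF_finite [Module.Finite A M] (j : Fin s) : Module.Finite (rsAlg I) (rsF I M j) := by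
  have : Module.Finite (rsAlg I) (rsMod I M) := Module.Finite.iff_fg.mpr (rsMod_fg I M)
  exact Module.Finite.of_surjective
    (Submodule.mkQ ((rsSub I M j).comap (rsMod I M).subtype)) (Submodule.mkQ_surjective _)

lemma rs_key [IsNoetherianRing A] [Module.Finite A M] (i j : Fin s) (x : I i)
    (h : ∀ P ∈ associatedPrimes (rsAlg I) (rsF I M j), rsT I i x ∈ P → rsJ I i ≤ P) :
    ∃ d : ℕ, ∀ n : Fin s →₀ ℕ, d ≤ n i → ∀ y ∈ rsPow I n • (⊤ : Submodule A M),
      (x : A) • y ∈ rsPow I (n + Finsupp.single j 1 + Finsupp.single i 1) •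
        (⊤ : Submodule A M) →
      y ∈ rsPow I (n + Finsupp.single j 1) • (⊤ : Submodule A M) := by
  have := rsAlg_noeth I
  have := rsF_finite I M j
  obtain ⟨d, hd⟩ := rs_ker_pow (F := rsF I M j) (rsJ I i) (rsT I i x) h
  refine ⟨d, fun n hn y hy hxy => ?_⟩
  have hmem := rs_mem I M i n y hy
  have hmem2 : MvPolynomial.monomial n (1 : A) ⊗ₜ[A] y ∈ rsMod I M :=
    Submodule.smul_le_right hmem
  let e : rsMod I M := ⟨_, hmem2⟩
  have he : e ∈ rsJ I i ^ n i • (⊤ : Submodule (rsAlg I) (rsMod I M)) := by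
    rw [← Submodule.comap_map_eq_of_injective (rsMod I M).injective_subtype
      (rsJ I i ^ n i • ⊤), Submodule.map_smul'', Submodule.map_top, Submodule.range_subtype]
    exact hmem
  let f : rsF I M j := Submodule.mkQ _ e
  have hf : f ∈ rsJ I i ^ d • (⊤ : Submodule (rsAlg I) (rsF I M j)) := by
    have h1 := Submodule.mem_map_of_mem
      (f := Submodule.mkQ ((rsSub I M j).comap (rsMod I M).subtype)) he
    rw [Submodule.map_smul''] at h1
    exact Submodule.smul_mono (Ideal.pow_le_pow_right hn) le_top h1
  have hT : rsT I i x • (MvPolynomial.monomial n (1 : A) ⊗ₜ[A] y) =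
      MvPolynomial.monomial (n + Finsupp.single i 1) (1 : A) ⊗ₜ[A] ((x : A) • y) := by
    rw [Subalgebra.smul_def, TensorProduct.smul_tmul', ← TensorProduct.smul_tmul,
      MvPolynomial.smul_monomial]
    change (MvPolynomial.monomial (Finsupp.single i 1) (x : A) *
      MvPolynomial.monomial n (1 : A)) ⊗ₜ[A] y = _
    rw [MvPolynomial.monomial_mul, add_comm]
    simp
  have hz : rsT I i x • f = 0 := by
    change Submodule.mkQ _ (rsT I i x • e) = 0
    rw [Submodule.mkQ_apply, Submodule.Quotient.mk_eq_zero, Submodule.mem_comap]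
    change rsT I i x • (MvPolynomial.monomial n (1 : A) ⊗ₜ[A] y) ∈ rsSub I M j
    rw [hT, rs_mem_sub_iff]
    rwa [add_right_comm]
  have hf0 := hd f hf hz
  change Submodule.mkQ _ e = 0 at hf0
  rw [Submodule.mkQ_apply, Submodule.Quotient.mk_eq_zero, Submodule.mem_comap] at hf0
  exact (rs_mem_sub_iff I M j n y).mp hf0

lemma rs_climb (i : Fin s) (x : A) (N : ℕ)
    (hN : ∀ j, ∀ n : Fin s →₀ ℕ, N ≤ n i → ∀ y ∈ rsPow I n • (⊤ : Submodule A M),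
      x • y ∈ rsPow I (n + Finsupp.single j 1 + Finsupp.single i 1) • (⊤ : Submodule A M) →
      y ∈ rsPow I (n + Finsupp.single j 1) • (⊤ : Submodule A M))
    (n' k : Fin s →₀ ℕ) (hn' : N ≤ n' i) (y : M)
    (hy : y ∈ rsPow I n' • (⊤ : Submodule A M))
    (hxy : x • y ∈ rsPow I (n' + k + Finsupp.single i 1) • (⊤ : Submodule A M)) :
    y ∈ rsPow I (n' + k) • (⊤ : Submodule A M) := by
  induction k using Finsupp.induction_linear generalizing n' with
  | zero => simpa using hy
  | add a b ha hb =>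
    rw [← add_assoc] at hxy ⊢
    refine hb (n' + a) (le_trans hn' (by simp)) (ha n' hn' hy ?_) hxy
    refine Submodule.smul_mono_left (rsPow_anti I ?_) hxy
    exact add_le_add_left le_self_add _
  | single j c =>
    induction c with
    | zero => simpa using hy
    | succ c ih =>
      rw [Finsupp.single_add, ← add_assoc] at hxy ⊢
      refine hN j _ (le_trans hn' (by simp)) y (ih ?_) hxy
      refine Submodule.smul_mono_left (rsPow_anti I ?_) hxy
      exact add_le_add_left le_self_add _

lemma rs_superficial [IsNoetherianRing A] [Module.Finite A M] (i : Fin s) (x : A) (hx : x ∈ I i)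
    (h : ∀ j, ∀ P ∈ associatedPrimes (rsAlg I) (rsF I M j),
      rsT I i ⟨x, hx⟩ ∈ P → rsJ I i ≤ P) :
    IsReesSuperficial A M I i x := by
  classical
  choose d hd using fun j => rs_key I M i j ⟨x, hx⟩ (h j)
  obtain ⟨c, hc⟩ := (I i).exists_pow_inf_eq_pow_smul (Ideal.span {x} • (⊤ : Submodule A M))
  let N := Finset.univ.sup d
  refine ⟨hx, N + c, fun n hn => ?_⟩
  let n0 : Fin s →₀ ℕ := Finsupp.equivFunOnFinite.symm n
  have e1 : (∏ j, I j ^ (n j + if j = i then 1 else 0)) =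
      rsPow I (n0 + Finsupp.single i 1) := by
    refine Finset.prod_congr rfl fun j _ => ?_
    congr 1
    simp [n0, Finsupp.single_apply, eq_comm]
  have e2 : (∏ j, I j ^ n j) = rsPow I n0 := rfl
  rw [e1, e2]
  apply le_antisymm
  · rintro z ⟨hz1, hz2⟩
    have hz3 : z ∈ I i ^ n i • (⊤ : Submodule A M) ⊓ Ideal.span {x} • (⊤ : Submodule A M) := by
      refine ⟨?_, hz1⟩
      rw [← rsPow_single]
      refine Submodule.smul_mono_left (rsPow_anti I ?_) hz2
      rw [Finsupp.single_le_iff]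
      simp [n0]
    rw [hc _ (by omega)] at hz3
    have hz4 : z ∈ Ideal.span {x} • (I i ^ (n i - c) • (⊤ : Submodule A M)) := by
      rw [← Submodule.mul_smul, mul_comm, Submodule.mul_smul]
      exact Submodule.smul_mono le_rfl inf_le_right hz3
    rw [Submodule.ideal_span_singleton_smul, Submodule.mem_smul_pointwise_iff_exists] at hz4
    obtain ⟨y, hy, rfl⟩ := hz4
    rw [Submodule.ideal_span_singleton_smul]
    refine Submodule.smul_mem_pointwise_smul _ _ _ ?_
    have hle : Finsupp.single i (n i - c) ≤ n0 := by
      rw [Finsupp.single_le_iff]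
      simp [n0]
    have hk := add_tsub_cancel_of_le hle
    rw [← rsPow_single] at hy
    rw [← hk] at hz2 ⊢
    refine rs_climb I M i x N ?_ _ _ ?_ y hy hz2
    · intro j m hm y hy hxy
      exact hd j m (le_trans (Finset.le_sup (Finset.mem_univ j)) hm) y hy hxy
    · rw [Finsupp.single_eq_same]; omega
  · apply le_inf
    · exact Submodule.smul_mono le_rfl le_top
    · rw [rsPow_add, rsPow_single, pow_one, mul_comm, Submodule.mul_smul]
      exact Submodule.smul_mono_left ((Ideal.span_singleton_le_iff_mem _).mpr hx)

end ReesAux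

/-- cf. Rees, Lemma 1.2.  If `I i` is contained in no prime of the finite
set `Σ`, then there is a non-empty Zariski open subset `U` of `I i / m I i` such that any
`x ∈ I i` whose image lies in `U` avoids all primes of `Σ` and is a Rees superficial
element of `(I 1, …, I s)` with respect to `M`. -/
theorem exists_zariskiOpen_reesSuperficial
    (A : Type*) [CommRing A] [IsNoetherianRing A] [IsLocalRing A]
    [Infinite (ResidueField A)]
    (M : Type*) [AddCommGroup M] [Module A M] [Module.Finite A M]
    {s : ℕ} (I : Fin s → Ideal A)
    (Sig : Finset (Ideal A)) (hSig : ∀ P ∈ Sig, P.IsPrime)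
    (i : Fin s) (hi : ∀ P ∈ Sig, ¬ I i ≤ P) :
    ∃ U : Set (↥(I i) ⧸ ((maximalIdeal A) • (⊤ : Submodule A ↥(I i)))),
      IsZariskiOpen A _ U ∧ U.Nonempty ∧
      ∀ (x : A) (hx : x ∈ I i),
        Submodule.Quotient.mk (⟨x, hx⟩ : I i) ∈ U →
          (∀ P ∈ Sig, x ∉ P) ∧ IsReesSuperficial A M I i x := by
  have := rsAlg_noeth I
  have := rsF_finite I M
  let W1 : Set (Submodule A (I i)) :=
    (fun P : Ideal A => Submodule.comap (I i).subtype P) '' (Sig : Set (Ideal A))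
  let g : Ideal (rsAlg I) → Submodule A (I i) :=
    fun P => Submodule.comap (rsT I i) (P.restrictScalars A)
  let W2 : Set (Submodule A (I i)) :=
    g '' ((⋃ j, associatedPrimes (rsAlg I) (rsF I M j)) ∩ {P | ¬ rsJ I i ≤ P})
  obtain ⟨U, hU, hne, hx⟩ := rs_open_avoid A (I i) (W1 ∪ W2) (by
      refine Set.Finite.union (Sig.finite_toSet.image _) (Set.Finite.image _ ?_)
      refine Set.Finite.inter_of_left (Set.finite_iUnion fun j => ?_) _
      exact associatedPrimes.finite _ _) (by
    rintro W (⟨P, hP, rfl⟩ | ⟨P, ⟨_, hP⟩, rfl⟩) htop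
    · refine hi P hP fun a ha => ?_
      have : (⟨a, ha⟩ : I i) ∈ Submodule.comap (I i).subtype P := by
        rw [show Submodule.comap (I i).subtype P = ⊤ from htop]; trivial
      exact this
    · refine hP (Ideal.span_le.mpr ?_)
      rintro _ ⟨a, rfl⟩
      have : a ∈ g P := by rw [htop]; trivial
      exact this)
  refine ⟨U, hU, hne, fun x hxI hxU => ⟨fun P hP hxP => ?_, ?_⟩⟩
  · exact hx _ hxU _ (Or.inl ⟨P, hP, rfl⟩) hxP
  · refine rs_superficial I M i x hxI fun j P hP hT => ?_
    by_contra hJ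
    exact hx _ hxU _ (Or.inr ⟨P, ⟨Set.mem_iUnion.mpr ⟨j, hP⟩, hJ⟩, rfl⟩) hT
end

section
/- Let (A, m) be a noetherian local ring with maximal ideal m and infinite residue field k = A/m, let I_1, ..., I_s be ideals of A, and let M be a finitely generated A-module. Assume I = I_1···I_s is not contained in √(Ann_A M). Then for any 1 ≤ i ≤ s there exists a non-empty Zariski open subset U of the k-vector space I_i/mI_i such that every x ∈ I_i whose image x + mI_i lies in U is a weak-(FC)-element of (I_1, ..., I_s) with respect to M. -/
open IsLocalRing

/-- If `a` avoids the associated primes not containing `J`, then the kernel of `a` is killed by a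
power of `J`. -/
theorem wfc_filterReg {R : Type*} [CommRing R] [IsNoetherianRing R] (N : Type*) [AddCommGroup N]
    [Module R N] [Module.Finite R N] (J : Ideal R) (a : R)
    (ha : ∀ P ∈ associatedPrimes R N, ¬ J ≤ P → a ∉ P) :
    ∃ c : ℕ, ∀ z : N, a • z = 0 → ∀ b ∈ J ^ c, b • z = 0 := by
  set K : Submodule R N := LinearMap.ker (LinearMap.lsmul R N a) with hK
  have hJ : J ≤ (Module.annihilator R K).radical := by
    rw [← Ideal.sInf_minimalPrimes]
    refine le_sInf fun P hP => ?_
    have h1 := Module.associatedPrimes.minimalPrimes_annihilator_subset_associatedPrimes R K hP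
    by_contra hJP
    refine ha P (associatedPrimes.subset_of_injective (Submodule.subtype_injective K) h1) hJP ?_
    refine hP.1.2 ?_
    rw [Module.mem_annihilator]
    rintro ⟨z, hz⟩
    ext
    simpa [hK] using hz
  obtain ⟨c, hc⟩ := Ideal.exists_pow_le_of_le_radical_of_fg hJ (IsNoetherian.noetherian J)
  refine ⟨c, fun z hz b hb => ?_⟩
  have := Module.mem_annihilator.1 (hc hb) ⟨z, by simpa [hK] using hz⟩
  simpa using congrArg Subtype.val this

theorem wfc_core_pow {R : Type*} [CommRing R] [IsNoetherianRing R] (N : Type*) [AddCommGroup N]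
    [Module R N] [Module.Finite R N] (J : Ideal R) (a u : R)
    (hu : ∀ z : N, u • z = 0 → z = 0)
    (ha : ∀ P ∈ associatedPrimes R (N ⧸ LinearMap.range (LinearMap.lsmul R N u)),
      ¬ J ≤ P → a ∉ P) (k : ℕ) :
    ∃ c : ℕ, ∀ z v : N, a • z = u ^ k • v → ∀ b ∈ J ^ c, ∃ w, b • z = u ^ k • w := by
  obtain ⟨c1, hc1⟩ := wfc_filterReg _ J a ha
  induction k with
  | zero => exact ⟨0, fun z v _ b _ => ⟨b • z, by simp⟩⟩
  | succ k ih =>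
    obtain ⟨c, hc⟩ := ih
    refine ⟨c + c1, fun z v hz b hb => ?_⟩
    rw [pow_add] at hb
    refine Submodule.mul_induction_on hb (fun p hp q hq => ?_) ?_
    · have h0 : a • (Submodule.Quotient.mk z :
          N ⧸ LinearMap.range (LinearMap.lsmul R N u)) = 0 := by
        rw [← Submodule.Quotient.mk_smul, Submodule.Quotient.mk_eq_zero]
        exact ⟨u ^ k • v, by simp [hz, smul_smul, pow_succ, mul_comm]⟩
      have h1 := hc1 _ h0 q hq
      rw [← Submodule.Quotient.mk_smul, Submodule.Quotient.mk_eq_zero] at h1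
      obtain ⟨w, hw⟩ := h1
      have hw' : u • w = q • z := by simpa using hw
      have h2 : a • w = u ^ k • (q • v) := by
        rw [← sub_eq_zero]
        apply hu
        have : u • a • w = a • q • z := by rw [← hw', smul_comm]
        rw [smul_sub, this, smul_comm a q, hz, sub_eq_zero, pow_succ']
        module
      obtain ⟨w', hw2⟩ := hc w _ h2 p hp
      refine ⟨w', ?_⟩
      rw [mul_smul, ← hw', smul_comm, hw2, smul_smul, pow_succ']
    · rintro x y ⟨w, hw⟩ ⟨w', hw'⟩
      exact ⟨w + w', by rw [add_smul, hw, hw', smul_add]⟩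

theorem wfc_core {R : Type*} [CommRing R] [IsNoetherianRing R] (N : Type*) [AddCommGroup N]
    [Module R N] [Module.Finite R N] (J : Ideal R) (a u : R)
    (hu : ∀ z : N, u • z = 0 → z = 0)
    (ha : ∀ P ∈ associatedPrimes R (N ⧸ LinearMap.range (LinearMap.lsmul R N u)),
      ¬ J ≤ P → a ∉ P) :
    ∃ (c : ℕ) (F : Finset N), (∀ y z : N, ∀ k : ℕ, u ^ k • y = a • z →
        y ∈ Submodule.span R (F : Set N)) ∧
      ∀ y ∈ F, ∀ b ∈ J ^ c, ∃ w, b • y = a • w := by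
  let T : Submodule R N :=
    { carrier := {y | ∃ (k : ℕ) (z : N), u ^ k • y = a • z}
      zero_mem' := ⟨0, 0, by simp⟩
      add_mem' := by
        rintro y y' ⟨k, z, h⟩ ⟨k', z', h'⟩
        refine ⟨k + k', u ^ k' • z + u ^ k • z', ?_⟩
        rw [smul_add, smul_add, smul_comm a, smul_comm a, ← h, ← h', pow_add]
        module
      smul_mem' := by
        rintro r y ⟨k, z, h⟩
        exact ⟨k, r • z, by rw [smul_comm, h, smul_comm]⟩ }
  obtain ⟨F, hF⟩ := (IsNoetherian.noetherian T : T.FG)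
  have key : ∀ y ∈ T, ∃ c : ℕ, ∀ b ∈ J ^ c, ∃ w, b • y = a • w := by
    rintro y ⟨k, z, h⟩
    obtain ⟨c, hc⟩ := wfc_core_pow N J a u hu ha k
    have huk : ∀ (k : ℕ) (z : N), u ^ k • z = 0 → z = 0 := by
      intro k
      induction k with
      | zero => intro z hz; simpa using hz
      | succ k ih => intro z hz; rw [pow_succ', mul_smul] at hz; exact ih _ (hu _ hz)
    refine ⟨c, fun b hb => ?_⟩
    obtain ⟨w, hw⟩ := hc z y h.symm b hb
    refine ⟨w, ?_⟩
    rw [← sub_eq_zero]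
    apply huk k
    rw [smul_sub, smul_comm, h, smul_comm, hw, sub_eq_zero, smul_comm]
  choose! cf hcf using key
  refine ⟨F.sup cf, F, fun y z k h => ?_, fun y hy b hb => ?_⟩
  · rw [hF]; exact ⟨k, z, h⟩
  · exact hcf y (hF ▸ Submodule.subset_span hy) b (Ideal.pow_le_pow_right (Finset.le_sup hy) hb)

/-- A non-zero finite module over a local ring surjects onto the residue field, killing a given
proper submodule. -/
theorem wfc_functional {A : Type*} [CommRing A] [IsLocalRing A] {E : Type*}
    [AddCommGroup E] [Module A E] [Module.Finite A E] (H : Submodule A E) (hH : H ≠ ⊤) :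
    ∃ l : E →ₗ[A] ResidueField A, Function.Surjective l ∧ H ≤ LinearMap.ker l := by
  obtain ⟨H', hH', hle⟩ := (eq_top_or_exists_le_coatom H).resolve_left hH
  have hs : IsSimpleModule A (E ⧸ H') := isSimpleModule_iff_isCoatom.2 hH'
  obtain ⟨m, hm, ⟨e⟩⟩ := isSimpleModule_iff_quot_maximal.1 hs
  obtain rfl := IsLocalRing.eq_maximalIdeal hm
  refine ⟨(e : (E ⧸ H') →ₗ[A] (A ⧸ maximalIdeal A)) ∘ₗ H'.mkQ, ?_, ?_⟩
  · exact e.surjective.comp H'.mkQ_surjective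
  · intro x hx
    have h0 : H'.mkQ x = 0 := (Submodule.Quotient.mk_eq_zero H').2 (hle hx)
    exact (congrArg e h0).trans (map_zero e)

theorem wfc_open {A : Type*} [CommRing A] [IsLocalRing A]
    [Infinite (ResidueField A)] {E : Type*}
    [AddCommGroup E] [Module A E] [Module.Finite A E] (S : Set (Submodule A E)) (hS : S.Finite)
    (hT : ∀ H ∈ S, H ≠ ⊤) :
    ∃ U : Set (E ⧸ (maximalIdeal A • (⊤ : Submodule A E))),
      IsZariskiOpen A _ U ∧ U.Nonempty ∧
      ∀ x : E, Submodule.Quotient.mk x ∈ U → ∀ H ∈ S, x ∉ H := by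
  choose! l hl hlk using fun (H : Submodule A E) (h : H ≠ ⊤) => wfc_functional H h
  have hk : ∀ H, maximalIdeal A • (⊤ : Submodule A E) ≤ LinearMap.ker (l H) := by
    intro H
    rw [Submodule.smul_le]
    intro r hr n _
    rw [LinearMap.mem_ker, map_smul, Algebra.smul_def]
    rw [show algebraMap A (ResidueField A) r = 0 from (residue_eq_zero_iff r).2 hr, zero_mul]
  let g : Submodule A E → (E ⧸ (maximalIdeal A • (⊤ : Submodule A E))) →ₗ[A] ResidueField A :=
    fun H => Submodule.liftQ _ (l H) (hk H)
  let f : (E ⧸ (maximalIdeal A • (⊤ : Submodule A E))) → ResidueField A :=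
    ∏ H ∈ hS.toFinset, ⇑(g H)
  have hf : ∀ v, f v = ∏ H ∈ hS.toFinset, g H v := fun v => Finset.prod_apply _ _ _
  refine ⟨{v | f v ≠ 0}, ⟨{f}, ?_, ?_⟩, ?_, ?_⟩
  · rintro _ rfl
    exact Subalgebra.prod_mem _ fun H _ => Algebra.subset_adjoin ⟨g H, rfl⟩
  · ext v; simp
  · have : ∃ x : E, ∀ H ∈ S, l H x ≠ 0 := by
      by_contra! hcon
      obtain ⟨H, hH, hfin⟩ := Submodule.exists_finiteIndex_of_cover (R := A) (M := E)
        (p := fun H => LinearMap.ker (l H)) (s := hS.toFinset) (by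
          ext x
          obtain ⟨H, hH, h0⟩ := hcon x
          simp only [Set.mem_iUnion, Set.mem_univ, iff_true]
          exact ⟨H, by simpa using hH, h0⟩)
      have hH' : H ∈ S := by simpa using hH
      have h1 : Finite (E ⧸ (LinearMap.ker (l H)).toAddSubgroup) := inferInstance
      have h2 : Finite (E ⧸ LinearMap.ker (l H)) := h1
      have := Finite.of_equiv _ ((l H).quotKerEquivOfSurjective (hl H (hT H hH'))).toEquiv
      exact not_finite (ResidueField A)
    obtain ⟨x, hx⟩ := this
    refine ⟨Submodule.Quotient.mk x, ?_⟩
    rw [Set.mem_ofPred_eq, hf, Finset.prod_ne_zero_iff]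
    intro H hH
    exact hx H (by simpa using hH)
  · intro x hx H hH hxH
    rw [Set.mem_ofPred_eq, hf, Finset.prod_ne_zero_iff] at hx
    exact hx H (by simpa using hH) (hlk H (hT H hH) hxH)

/-- The ideal `I_1^{n_1} ⋯ I_s^{n_s}` for integral exponents (negative ones count as zero). -/
noncomputable def wfcI {A : Type*} [CommRing A] {s : ℕ} (I : Fin s → Ideal A) (n : Fin s → ℤ) :
    Ideal A := ∏ j, I j ^ (n j).toNat

theorem wfcI_nonpos {A : Type*} [CommRing A] {s : ℕ} (I : Fin s → Ideal A) (n : Fin s → ℤ)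
    (hn : ∀ j, n j ≤ 0) : wfcI I n = ⊤ := by
  unfold wfcI
  rw [← Ideal.one_eq_top]
  exact Finset.prod_eq_one fun j _ => by rw [Int.toNat_of_nonpos (hn j), pow_zero]

theorem wfcI_mul {A : Type*} [CommRing A] {s : ℕ} (I : Fin s → Ideal A) (n m : Fin s → ℤ) :
    wfcI I n * wfcI I m ≤ wfcI I (n + m) := by
  unfold wfcI
  rw [← Finset.prod_mul_distrib]
  refine Finset.prod_le_prod' fun j _ => ?_
  rw [← pow_add]
  refine Ideal.pow_le_pow_right ?_
  simp only [Pi.add_apply]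
  omega

theorem wfcI_single {A : Type*} [CommRing A] {s : ℕ} (I : Fin s → Ideal A) (i : Fin s) (z : ℤ) :
    wfcI I (Pi.single i z) = I i ^ z.toNat := by
  unfold wfcI
  rw [Finset.prod_eq_single i]
  · simp
  · intro j _ hj; simp [hj]
  · simp

theorem wfcI_le {A : Type*} [CommRing A] {s : ℕ} (I : Fin s → Ideal A) (i : Fin s) (c : ℕ)
    (n : Fin s → ℤ) (hc : (c : ℤ) ≤ n i) :
    wfcI I n ≤ I i ^ c * wfcI I (n - Pi.single i (c : ℤ)) := by
  unfold wfcI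
  have h2 := Finset.mul_prod_erase Finset.univ
    (fun j => I j ^ ((n - Pi.single i (c : ℤ) : Fin s → ℤ) j).toNat) (Finset.mem_univ i)
  have h1 := Finset.mul_prod_erase Finset.univ (fun j => I j ^ (n j).toNat) (Finset.mem_univ i)
  rw [← h1]
  refine le_trans ?_ (le_of_eq (congrArg (I i ^ c * ·) h2))
  rw [← mul_assoc, ← pow_add]
  refine Ideal.mul_mono (Ideal.pow_le_pow_right ?_) (Finset.prod_le_prod' fun j hj => ?_)
  · simp; omega
  · simp [Finset.ne_of_mem_erase hj]

/-- The multi-graded extended Rees algebra. -/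
noncomputable def wfcRees {A : Type*} [CommRing A] {s : ℕ} (I : Fin s → Ideal A) :
    Subalgebra A (AddMonoidAlgebra A (Fin s → ℤ)) where
  carrier := {f | ∀ n, f.coeff n ∈ wfcI I n}
  add_mem' := fun hf hg n => Ideal.add_mem _ (hf n) (hg n)
  mul_mem' := by
    intro f g hf hg n
    rw [AddMonoidAlgebra.mul_def]
    simp only [Finsupp.sum, Finsupp.coe_finsetSum,
      Finset.sum_apply, AddMonoidAlgebra.coeff_sum]
    refine Ideal.sum_mem _ fun p _ => Ideal.sum_mem _ fun q _ => ?_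
    rw [AddMonoidAlgebra.coeff_single, Finsupp.single_apply]
    split_ifs with h
    · rw [← h]; exact wfcI_mul I p q (Ideal.mul_mem_mul (hf p) (hg q))
    · exact Ideal.zero_mem _
  algebraMap_mem' := by
    intro a n
    rw [AddMonoidAlgebra.coe_algebraMap]
    simp only [Function.comp, AddMonoidAlgebra.coeff_single, Finsupp.single_apply]
    split_ifs with h
    · rw [wfcI_nonpos I n (fun j => by rw [← h]; simp)]; trivial
    · exact Ideal.zero_mem _

theorem wfc_single_mem {A : Type*} [CommRing A] {s : ℕ} (I : Fin s → Ideal A) (n : Fin s → ℤ)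
    {a : A} (ha : a ∈ wfcI I n) : AddMonoidAlgebra.single n a ∈ wfcRees I := by
  intro m
  rw [AddMonoidAlgebra.coeff_single, Finsupp.single_apply]
  split_ifs with h
  · exact h ▸ ha
  · exact Ideal.zero_mem _

theorem wfc_noeth {A : Type*} [CommRing A] [IsNoetherianRing A] {s : ℕ} (I : Fin s → Ideal A) :
    IsNoetherianRing (wfcRees I) := by
  choose G hG using fun j => (IsNoetherian.noetherian (I j) : (I j).FG)
  let S : Set (AddMonoidAlgebra A (Fin s → ℤ)) :=
    (⋃ j, (fun g => AddMonoidAlgebra.single (Pi.single j (1 : ℤ)) g) '' (G j : Set A)) ∪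
      Set.range (fun j : Fin s => AddMonoidAlgebra.single (Pi.single j (-1 : ℤ)) (1 : A))
  have hSfin : S.Finite :=
    (Set.finite_iUnion fun j => (G j).finite_toSet.image _).union (Set.finite_range _)
  let W : (Fin s → ℤ) → Ideal A := fun n =>
    (Subalgebra.toSubmodule (Algebra.adjoin A S)).comap (AddMonoidAlgebra.lsingle (R := A) n)
  have hWm : ∀ n a, a ∈ W n ↔ AddMonoidAlgebra.single n a ∈ Algebra.adjoin A S :=
    fun n a => Iff.rfl
  have hWmul : ∀ n m, W n * W m ≤ W (n + m) := by
    intro n m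
    rw [Ideal.mul_le]
    intro a ha b hb
    rw [hWm] at *
    rw [← AddMonoidAlgebra.single_mul_single]
    exact mul_mem ha hb
  have hW0 : W 0 = ⊤ := by
    rw [Ideal.eq_top_iff_one, hWm]
    exact one_mem _
  have hWp : ∀ j (k : ℕ), I j ^ k ≤ W (Pi.single j (k : ℤ)) := by
    intro j k
    induction k with
    | zero => simp [hW0]
    | succ k ih =>
      have h1 : I j ≤ W (Pi.single j 1) := by
        rw [← hG j, Submodule.span_le]
        intro g hg
        exact Algebra.subset_adjoin (Or.inl (Set.mem_iUnion.2 ⟨j, g, hg, rfl⟩))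
      rw [pow_succ]
      refine (Ideal.mul_mono ih h1).trans ((hWmul _ _).trans (le_of_eq ?_))
      rw [← Pi.single_add]; norm_cast
  have hWn : ∀ j (k : ℕ), W (Pi.single j (-(k : ℤ))) = ⊤ := by
    intro j k
    induction k with
    | zero => simp [hW0]
    | succ k ih =>
      have h1 : W (Pi.single j (-1)) = ⊤ := by
        rw [Ideal.eq_top_iff_one, hWm]
        exact Algebra.subset_adjoin (Or.inr ⟨j, rfl⟩)
      rw [eq_top_iff]
      have := hWmul (Pi.single j (-(k : ℤ))) (Pi.single j (-1))
      rw [ih, h1, Ideal.top_mul, ← Pi.single_add] at this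
      refine this.trans (le_of_eq ?_)
      congr 2; push_cast; ring
  have hWz : ∀ j (z : ℤ), I j ^ z.toNat ≤ W (Pi.single j z) := by
    intro j z
    rcases le_total 0 z with h | h
    · have := hWp j z.toNat
      rwa [Int.toNat_of_nonneg h] at this
    · have := hWn j (-z).toNat
      rw [Int.toNat_of_nonneg (by omega), neg_neg] at this
      rw [this]; exact le_top
  have hWprod : ∀ (n : Fin s → ℤ) (t : Finset (Fin s)),
      ∏ j ∈ t, I j ^ (n j).toNat ≤ W (∑ j ∈ t, Pi.single j (n j)) := by
    intro n t
    induction t using Finset.cons_induction with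
    | empty => simp [hW0]
    | cons j t hj ih =>
      rw [Finset.prod_cons, Finset.sum_cons]
      exact (Ideal.mul_mono (hWz j _) ih).trans (hWmul _ _)
  have hle : wfcRees I = Algebra.adjoin A S := by
    apply le_antisymm
    · intro f hf
      rw [← AddMonoidAlgebra.sum_coeff_single f]
      refine sum_mem fun n _ => ?_
      have := hWprod n Finset.univ (hf n)
      rwa [Finset.univ_sum_single] at this
    · refine Algebra.adjoin_le ?_
      rintro _ (h | ⟨j, rfl⟩)
      · obtain ⟨j, g, hg, rfl⟩ := Set.mem_iUnion.1 h
        refine wfc_single_mem I _ ?_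
        rw [wfcI_single]
        have : g ∈ I j := hG j ▸ Submodule.subset_span hg
        simpa using this
      · refine wfc_single_mem I _ ?_
        rw [wfcI_single]; simp
  have hfg : (wfcRees I).FG := hle ▸ Subalgebra.fg_def.2 ⟨S, hSfin, rfl⟩
  have : Algebra.FiniteType A (wfcRees I) := (wfcRees I).fg_iff_finiteType.1 hfg
  exact Algebra.FiniteType.isNoetherianRing A _

section WfcModule

open TensorProduct

/-- The ambient Laurent module. -/
def WfcL (A : Type*) [CommRing A] (s : ℕ) (M : Type*) [AddCommGroup M] [Module A M] :=
  AddMonoidAlgebra A (Fin s → ℤ) ⊗[A] M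

noncomputable instance (A : Type*) [CommRing A] (s : ℕ) (M : Type*) [AddCommGroup M] [Module A M] :
    AddCommGroup (WfcL A s M) :=
  inferInstanceAs (AddCommGroup (AddMonoidAlgebra A (Fin s → ℤ) ⊗[A] M))

noncomputable instance (A : Type*) [CommRing A] (s : ℕ) (M : Type*) [AddCommGroup M] [Module A M] :
    Module A (WfcL A s M) :=
  inferInstanceAs (Module A (AddMonoidAlgebra A (Fin s → ℤ) ⊗[A] M))

noncomputable instance (A : Type*) [CommRing A] (s : ℕ) (M : Type*) [AddCommGroup M] [Module A M] :
    Module (AddMonoidAlgebra A (Fin s → ℤ)) (WfcL A s M) :=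
  inferInstanceAs (Module (AddMonoidAlgebra A (Fin s → ℤ)) (AddMonoidAlgebra A (Fin s → ℤ) ⊗[A] M))

/-- The pure tensors, as a bilinear map. -/
noncomputable def wfcT (A : Type*) [CommRing A] (s : ℕ) (M : Type*) [AddCommGroup M] [Module A M] :
    AddMonoidAlgebra A (Fin s → ℤ) →ₗ[A] M →ₗ[A] WfcL A s M :=
  TensorProduct.mk A (AddMonoidAlgebra A (Fin s → ℤ)) M

theorem wfcL_ind {A : Type*} [CommRing A] {s : ℕ} {M : Type*} [AddCommGroup M] [Module A M]
    {p : WfcL A s M → Prop} (z : WfcL A s M) (zero : p 0)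
    (add : ∀ x y, p x → p y → p (x + y)) (tmul : ∀ f m, p (wfcT A s M f m)) : p z :=
  TensorProduct.induction_on z zero tmul add

theorem wfc_smul_tmul {A : Type*} [CommRing A] {s : ℕ} {M : Type*} [AddCommGroup M] [Module A M]
    (g f : AddMonoidAlgebra A (Fin s → ℤ)) (m : M) :
    g • wfcT A s M f m = wfcT A s M (g * f) m := rfl

theorem wfcRees_smul {A : Type*} [CommRing A] {s : ℕ} {M : Type*} [AddCommGroup M] [Module A M]
    (I : Fin s → Ideal A) (r : wfcRees I) (z : WfcL A s M) :
    r • z = (r : AddMonoidAlgebra A (Fin s → ℤ)) • z := rfl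

/-- The coefficient of degree `n`. -/
noncomputable def wfcCf (A : Type*) [CommRing A] {s : ℕ} (M : Type*) [AddCommGroup M] [Module A M]
    (n : Fin s → ℤ) : WfcL A s M →ₗ[A] M :=
  show AddMonoidAlgebra A (Fin s → ℤ) ⊗[A] M →ₗ[A] M from (TensorProduct.lid A M).toLinearMap ∘ₗ
    LinearMap.rTensor M (Finsupp.lapply n ∘ₗ (AddMonoidAlgebra.coeffLinearEquiv A).toLinearMap)

theorem wfcCf_tmul (A : Type*) [CommRing A] {s : ℕ} (M : Type*) [AddCommGroup M] [Module A M]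
    (n : Fin s → ℤ) (f : AddMonoidAlgebra A (Fin s → ℤ)) (m : M) :
    wfcCf A M n (wfcT A s M f m) = f.coeff n • m := rfl

variable {A : Type*} [CommRing A] {s : ℕ} (I : Fin s → Ideal A) (M : Type*) [AddCommGroup M]
  [Module A M]

theorem wfcCf_single_smul (n d : Fin s → ℤ) (b : A) (r : wfcRees I)
    (hr : (r : AddMonoidAlgebra A (Fin s → ℤ)) = AddMonoidAlgebra.single d b) (z : WfcL A s M) :
    wfcCf A M n (r • z) = b • wfcCf A M (n - d) z := by
  induction z using wfcL_ind with
  | zero => simp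
  | add x y hx hy => rw [smul_add, map_add, hx, hy, map_add, smul_add]
  | tmul f m =>
    rw [wfcRees_smul, wfc_smul_tmul, wfcCf_tmul, wfcCf_tmul, hr,
      AddMonoidAlgebra.coeff_single_mul_apply, mul_smul, neg_add_eq_sub]

theorem wfcCf_bdd (i : Fin s) (z : WfcL A s M) :
    ∃ D : ℕ, ∀ n : Fin s → ℤ, (D : ℤ) ≤ n i → wfcCf A M n z = 0 := by
  induction z using wfcL_ind with
  | zero => exact ⟨0, by simp⟩
  | add x y hx hy =>
    obtain ⟨D, hD⟩ := hx
    obtain ⟨D', hD'⟩ := hy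
    refine ⟨D + D', fun n hn => ?_⟩
    push_cast at hn
    rw [map_add, hD n (by omega), hD' n (by omega), add_zero]
  | tmul f m =>
    refine ⟨f.coeff.support.sup (fun n => (n i).toNat) + 1, fun n hn => ?_⟩
    rw [wfcCf_tmul]
    by_cases h : n ∈ f.coeff.support
    · have := Finset.le_sup (f := fun n : Fin s → ℤ => (n i).toNat) h
      have h' : (n i).toNat ≤ _ := this
      push_cast at hn
      omega
    · rw [Finsupp.notMem_support_iff.1 h, zero_smul]

/-- The map from `R ⊗ M` to the Laurent module. -/
noncomputable def wfcPhi : (wfcRees I) ⊗[A] M →ₗ[wfcRees I] WfcL A s M where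
  toFun := TensorProduct.lift (wfcT A s M ∘ₗ (wfcRees I).val.toLinearMap)
  map_add' := map_add _
  map_smul' := by
    intro r z
    induction z using TensorProduct.induction_on with
    | zero => simp
    | add x y hx hy => rw [smul_add, map_add, hx, hy, map_add, smul_add]
    | tmul f m => rfl

theorem wfcPhi_tmul (r : wfcRees I) (m : M) :
    wfcPhi I M (r ⊗ₜ m) = wfcT A s M (r : AddMonoidAlgebra A (Fin s → ℤ)) m := rfl

/-- The extended Rees module. -/
noncomputable def wfcN : Submodule (wfcRees I) (WfcL A s M) :=
  LinearMap.range (wfcPhi I M)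

theorem wfcN_finite [Module.Finite A M] : Module.Finite (wfcRees I) (wfcN I M) := by
  unfold wfcN
  infer_instance

theorem wfcN_cf (z : WfcL A s M) (hz : z ∈ wfcN I M) (n : Fin s → ℤ) :
    wfcCf A M n z ∈ wfcI I n • (⊤ : Submodule A M) := by
  obtain ⟨w, rfl⟩ := hz
  induction w using TensorProduct.induction_on with
  | zero => simp
  | add x y hx hy => rw [map_add, map_add]; exact add_mem hx hy
  | tmul f m =>
    rw [wfcPhi_tmul, wfcCf_tmul]
    exact Submodule.smul_mem_smul (f.2 n) trivial

theorem wfcN_mem (n : Fin s → ℤ) (y : M) (hy : y ∈ wfcI I n • (⊤ : Submodule A M)) :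
    wfcT A s M (AddMonoidAlgebra.single n (1 : A)) y ∈ wfcN I M := by
  refine Submodule.smul_induction_on hy (fun a ha m _ => ?_) (fun x y hx hy => ?_)
  · refine ⟨(⟨_, wfc_single_mem I n ha⟩ : wfcRees I) ⊗ₜ m, ?_⟩
    rw [wfcPhi_tmul, map_smul, ← LinearMap.smul_apply, ← map_smul]
    simp
  · rw [map_add]; exact add_mem hx hy

/-- The element `x t_i` of the Rees algebra. -/
noncomputable def wfcPsi (i : Fin s) : I i →ₗ[A] wfcRees I where
  toFun x := ⟨AddMonoidAlgebra.single (Pi.single i 1) (x : A), wfc_single_mem I _ (by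
    rw [wfcI_single]; simp)⟩
  map_add' x y := by ext1; simp [AddMonoidAlgebra.single_add]
  map_smul' r x := by ext1; simp

/-- The ideal generated by `I_i t_i`. -/
noncomputable def wfcJ (i : Fin s) : Ideal (wfcRees I) := Ideal.span (Set.range (wfcPsi I i))

/-- The element `t_1⁻¹ ⋯ t_s⁻¹`. -/
noncomputable def wfcU : wfcRees I :=
  ⟨AddMonoidAlgebra.single (fun _ => -1) 1, wfc_single_mem I _ (by
    rw [wfcI_nonpos I _ (fun _ => by norm_num)]; trivial)⟩

theorem wfcJ_pow_mem (i : Fin s) (c : ℕ) (p : A) (hp : p ∈ I i ^ c)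
    (h : AddMonoidAlgebra.single (Pi.single i (c : ℤ)) p ∈ wfcRees I) :
    (⟨_, h⟩ : wfcRees I) ∈ wfcJ I i ^ c := by
  induction c generalizing p with
  | zero => simp
  | succ c ih =>
    have key : ∀ p ∈ I i ^ (c + 1), ∃ q ∈ wfcJ I i ^ (c + 1),
        (q : AddMonoidAlgebra A (Fin s → ℤ)) =
          AddMonoidAlgebra.single (Pi.single i ((c + 1 : ℕ) : ℤ)) p := by
      intro p hp
      rw [pow_succ] at hp
      refine Submodule.mul_induction_on hp (fun a ha b hb => ?_) ?_
      · have hm : AddMonoidAlgebra.single (Pi.single i (c : ℤ)) a ∈ wfcRees I :=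
          wfc_single_mem I _ (by rw [wfcI_single]; simpa using ha)
        refine ⟨⟨_, hm⟩ * wfcPsi I i ⟨b, hb⟩, ?_, ?_⟩
        · rw [pow_succ]
          exact Ideal.mul_mem_mul (ih a ha hm) (Ideal.subset_span ⟨_, rfl⟩)
        · change AddMonoidAlgebra.single _ _ * AddMonoidAlgebra.single _ _ = _
          rw [AddMonoidAlgebra.single_mul_single, ← Pi.single_add]
          norm_cast
      · rintro x y ⟨q, hq, h1⟩ ⟨q', hq', h2⟩
        refine ⟨q + q', add_mem hq hq', ?_⟩
        rw [AddMonoidAlgebra.single_add, ← h1, ← h2]; rfl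
    obtain ⟨q, hq, h1⟩ := key p hp
    convert hq using 1
    ext1; exact h1.symm

theorem wfcJ_mem (i : Fin s) (c : ℕ) (n : Fin s → ℤ) (hc : (c : ℤ) ≤ n i) (a : A)
    (ha : a ∈ wfcI I n) (h : AddMonoidAlgebra.single n a ∈ wfcRees I) :
    (⟨_, h⟩ : wfcRees I) ∈ wfcJ I i ^ c := by
  have key : ∃ q ∈ wfcJ I i ^ c, (q : AddMonoidAlgebra A (Fin s → ℤ)) =
      AddMonoidAlgebra.single n a := by
    refine Submodule.mul_induction_on (wfcI_le I i c n hc ha) (fun a ha b hb => ?_) ?_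
    · have hm : AddMonoidAlgebra.single (Pi.single i (c : ℤ)) a ∈ wfcRees I :=
        wfc_single_mem I _ (by rw [wfcI_single]; simpa using ha)
      refine ⟨⟨_, hm⟩ * ⟨_, wfc_single_mem I _ hb⟩,
        Ideal.mul_mem_right _ _ (wfcJ_pow_mem I i c a ha hm), ?_⟩
      change AddMonoidAlgebra.single _ _ * AddMonoidAlgebra.single _ _ = _
      rw [AddMonoidAlgebra.single_mul_single, add_sub_cancel]
    · rintro x y ⟨q, hq, h1⟩ ⟨q', hq', h2⟩
      refine ⟨q + q', add_mem hq hq', ?_⟩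
      rw [AddMonoidAlgebra.single_add, ← h1, ← h2]; rfl
  obtain ⟨q, hq, h1⟩ := key
  convert hq using 1
  ext1; exact h1.symm

theorem wfc_split (i : Fin s) (c : ℕ) (r : wfcRees I) :
    ∃ r' ∈ wfcJ I i ^ c, ∀ (D : ℕ) (z : WfcL A s M),
      (∀ n : Fin s → ℤ, (D : ℤ) ≤ n i → wfcCf A M n z = 0) →
      ∀ n : Fin s → ℤ, (c + D : ℤ) ≤ n i → wfcCf A M n (r • z) = wfcCf A M n (r' • z) := by
  classical
  let t : (Fin s → ℤ) → wfcRees I := fun d => ⟨_, wfc_single_mem I d (r.2 d)⟩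
  have hr : r = ∑ d ∈ (r : AddMonoidAlgebra A (Fin s → ℤ)).coeff.support, t d := by
    ext1
    rw [AddSubmonoidClass.coe_finsetSum]
    exact (AddMonoidAlgebra.sum_coeff_single (r : AddMonoidAlgebra A (Fin s → ℤ))).symm
  refine ⟨∑ d ∈ (r : AddMonoidAlgebra A (Fin s → ℤ)).coeff.support with (c : ℤ) ≤ d i, t d,
    Ideal.sum_mem _ fun d hd => wfcJ_mem I i c d (Finset.mem_filter.1 hd).2 _ (r.2 d) _, ?_⟩
  intro D z hz n hn
  conv_lhs => rw [hr]
  rw [← Finset.sum_filter_add_sum_filter_not _ (fun d : Fin s → ℤ => (c : ℤ) ≤ d i), add_smul,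
    map_add, add_eq_left, Finset.sum_smul, map_sum]
  refine Finset.sum_eq_zero fun d hd => ?_
  have hd' := (Finset.mem_filter.1 hd).2
  rw [wfcCf_single_smul I M n d _ (t d) rfl, hz, smul_zero]
  simp only [Pi.sub_apply]
  omega

theorem wfcU_pow (k : ℕ) : ((wfcU I ^ k : wfcRees I) : AddMonoidAlgebra A (Fin s → ℤ)) =
    AddMonoidAlgebra.single (fun _ => -(k : ℤ)) 1 := by
  rw [SubmonoidClass.coe_pow]
  change (AddMonoidAlgebra.single _ _) ^ k = _
  rw [AddMonoidAlgebra.single_pow]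
  congr 1
  · ext j; simp
  · simp

theorem wfcU_inj (z : WfcL A s M) (hz : wfcU I • z = 0) : z = 0 := by
  have h : ∀ z : WfcL A s M, (AddMonoidAlgebra.single (fun _ => (1 : ℤ)) (1 : A) :
      AddMonoidAlgebra A (Fin s → ℤ)) • (wfcU I • z) = z := by
    intro z
    induction z using wfcL_ind with
    | zero => simp
    | add x y hx hy => rw [smul_add, smul_add, hx, hy]
    | tmul f m =>
      rw [wfcRees_smul, smul_smul]
      change (AddMonoidAlgebra.single _ _ * AddMonoidAlgebra.single _ _) • wfcT A s M f m = _
      rw [AddMonoidAlgebra.single_mul_single]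
      have : (fun _ => (1 : ℤ)) + (fun _ => (-1 : ℤ)) = (0 : Fin s → ℤ) := by ext; simp
      rw [this, mul_one, ← AddMonoidAlgebra.one_def, one_smul]
  rw [← h z, hz, smul_zero]

/-- The associated primes of `N / u N`. -/
def wfcAss {R : Type*} [CommRing R] (N : Type*) [AddCommGroup N] [Module R N] (u : R) :
    Set (Ideal R) :=
  associatedPrimes R (N ⧸ LinearMap.range (LinearMap.lsmul R N u))

theorem wfcAss_finite {R : Type*} [CommRing R] [IsNoetherianRing R] (N : Type*) [AddCommGroup N]
    [Module R N] [Module.Finite R N] (u : R) : (wfcAss N u).Finite :=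
  associatedPrimes.finite R _

theorem wfc_superficial [IsNoetherianRing A] [Module.Finite A M] (i : Fin s) (x : A)
    (hx : x ∈ I i)
    (ha : ∀ P ∈ wfcAss (wfcN I M) (wfcU I),
      ¬ wfcJ I i ≤ P → wfcPsi I i ⟨x, hx⟩ ∉ P) :
    IsReesSuperficial A M I i x := by
  classical
  have := wfc_noeth I
  have := wfcN_finite I M
  obtain ⟨c, F, hF, hc⟩ := wfc_core (wfcN I M) (wfcJ I i) (wfcPsi I i ⟨x, hx⟩) (wfcU I)
    (fun z hz => Subtype.ext (wfcU_inj I M z (congrArg Subtype.val hz))) ha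
  choose Df hDf using fun z : wfcN I M => wfcCf_bdd (A := A) M i (z : WfcL A s M)
  have hcf : ∀ (n : Fin s → ℤ) (z : WfcL A s M), wfcCf A M n (wfcPsi I i ⟨x, hx⟩ • z) =
      x • wfcCf A M (n - Pi.single i 1) z :=
    fun n z => wfcCf_single_smul I M n _ x _ rfl z
  refine ⟨hx, c + F.sup Df, fun n hn => ?_⟩
  have e1 : (∏ j, I j ^ (n j + if j = i then 1 else 0)) =
      wfcI I ((fun j => (n j : ℤ)) + Pi.single i 1) := by
    unfold wfcI
    refine Finset.prod_congr rfl fun j _ => ?_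
    congr 1
    by_cases h : j = i
    · subst h; simp
    · simp [h]
  have e2 : (∏ j, I j ^ (n j)) = wfcI I (fun j => (n j : ℤ)) := by
    simp [wfcI]
  apply le_antisymm
  · rintro y ⟨hy1, hy2⟩
    rw [SetLike.mem_coe, Submodule.ideal_span_singleton_smul] at hy1
    obtain ⟨m, -, rfl⟩ := (Submodule.mem_smul_pointwise_iff_exists _ _ _).1 hy1
    rw [SetLike.mem_coe, e1] at hy2
    rw [e2]
    set ν : Fin s → ℤ := fun j => (n j : ℤ) with hν
    obtain ⟨K, hK⟩ : ∃ K : ℕ, ∀ j, n j ≤ K :=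
      ⟨∑ j, n j, fun j => Finset.single_le_sum (fun _ _ => Nat.zero_le _) (Finset.mem_univ j)⟩
    let Y : wfcN I M := ⟨_, wfcN_mem I M _ _ hy2⟩
    let Z : wfcN I M := ⟨_, wfcN_mem I M (ν + fun _ => -(K : ℤ)) m (by
      rw [wfcI_nonpos]
      · simp
      · intro j; have := hK j; simp [hν, this])⟩
    have hYZ : wfcU I ^ K • Y = wfcPsi I i ⟨x, hx⟩ • Z := by
      ext1
      change ((wfcU I ^ K : wfcRees I) : AddMonoidAlgebra A (Fin s → ℤ)) •
        wfcT A s M (AddMonoidAlgebra.single (ν + Pi.single i 1) 1) (x • m) =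
        (AddMonoidAlgebra.single (Pi.single i 1) x : AddMonoidAlgebra A (Fin s → ℤ)) •
        wfcT A s M (AddMonoidAlgebra.single (ν + fun _ => -(K : ℤ)) 1) m
      rw [wfcU_pow, wfc_smul_tmul, wfc_smul_tmul, AddMonoidAlgebra.single_mul_single,
        AddMonoidAlgebra.single_mul_single, map_smul, ← LinearMap.smul_apply, ← map_smul,
        AddMonoidAlgebra.smul_single, mul_one, mul_one, smul_eq_mul, mul_one]
      congr 3
      abel
    have hYF := hF Y Z K hYZ
    obtain ⟨r, -, hr⟩ := Submodule.mem_span_finset.1 hYF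
    choose r' hr' hsp using fun y => wfc_split I M i c (r y)
    choose! w hw using fun y (hy : y ∈ F) => hc y hy (r' y) (hr' y)
    have h1 : ∀ y ∈ F, wfcCf A M (ν + Pi.single i 1) ((r y • y : wfcN I M) : WfcL A s M) =
        x • wfcCf A M ν (w y : WfcL A s M) := by
      intro y hy
      have h2 : Df y ≤ F.sup Df := Finset.le_sup hy
      have h3 := hsp y (Df y) (y : WfcL A s M) (hDf y) (ν + Pi.single i 1) (by
        simp [hν]; omega)
      rw [Submodule.coe_smul, h3, ← Submodule.coe_smul, hw y hy, Submodule.coe_smul, hcf,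
        add_sub_cancel_right]
    have h4 : wfcCf A M (ν + Pi.single i 1) (Y : WfcL A s M) = x • m := by
      change wfcCf A M _ (wfcT A s M _ _) = _
      rw [wfcCf_tmul]
      simp
    rw [← h4, ← hr, AddSubmonoidClass.coe_finsetSum, map_sum, Finset.sum_congr rfl h1,
      Submodule.ideal_span_singleton_smul]
    refine sum_mem fun y _ => Submodule.smul_mem_pointwise_smul _ _ _ (wfcN_cf I M _ (w y).2 _)
  · refine le_inf (smul_mono_right _ le_top) ?_
    rw [e1, e2, ← Submodule.mul_smul]
    refine Submodule.smul_mono_left (le_trans (Ideal.mul_mono_left (J := wfcI I (Pi.single i 1)) ?_)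
      ((wfcI_mul I _ _).trans (le_of_eq (by rw [add_comm]))))
    rw [Ideal.span_singleton_le_iff_mem, wfcI_single]
    simpa using hx

end WfcModule


/-- If `I = I 1 ⋯ I s ⊄ √(Ann_A M)`, then for each `i` there is a
non-empty Zariski open subset `U` of `I i / m I i` such that any `x ∈ I i` whose image lies
in `U` is a weak-(FC)-element of `(I 1, …, I s)` with respect to `M`, i.e. a Rees
superficial element which is `I`-filter-regular with respect to `M`. -/
theorem exists_zariskiOpen_weakFC
    (A : Type*) [CommRing A] [IsNoetherianRing A] [IsLocalRing A]
    [Infinite (ResidueField A)]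
    (M : Type*) [AddCommGroup M] [Module A M] [Module.Finite A M]
    {s : ℕ} (I : Fin s → Ideal A)
    (hI : ¬ (∏ i, I i) ≤ (Module.annihilator A M).radical)
    (i : Fin s) :
    ∃ U : Set (↥(I i) ⧸ ((maximalIdeal A) • (⊤ : Submodule A ↥(I i)))),
      IsZariskiOpen A _ U ∧ U.Nonempty ∧
      ∀ (x : A) (hx : x ∈ I i),
        Submodule.Quotient.mk (⟨x, hx⟩ : I i) ∈ U →
          IsReesSuperficial A M I i x ∧
          (∀ m : M, x • m = 0 → m ∈ satSub A M (∏ i, I i)) := by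
  classical
  have := wfc_noeth I
  have := wfcN_finite I M
  let S1 : Set (Submodule A (I i)) :=
    (fun P : Ideal (wfcRees I) => (P.restrictScalars A).comap (wfcPsi I i)) ''
      {P | P ∈ wfcAss (wfcN I M) (wfcU I) ∧ ¬ wfcJ I i ≤ P}
  let S2 : Set (Submodule A (I i)) :=
    (fun p : Ideal A => Submodule.comap (I i).subtype p) ''
      {p | p ∈ associatedPrimes A M ∧ ¬ (∏ i, I i) ≤ p}
  have hfin : (S1 ∪ S2).Finite :=
    (((wfcAss_finite (wfcN I M) (wfcU I)).subset fun P h => h.1).image _).union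
      (((associatedPrimes.finite A M).subset fun P h => h.1).image _)
  have htop : ∀ H ∈ S1 ∪ S2, H ≠ ⊤ := by
    rintro _ (⟨P, ⟨-, hP⟩, rfl⟩ | ⟨p, ⟨-, hp⟩, rfl⟩) h
    · refine hP (Ideal.span_le.2 ?_)
      rintro _ ⟨x, rfl⟩
      have : x ∈ (P.restrictScalars A).comap (wfcPsi I i) := by
        rw [show (P.restrictScalars A).comap (wfcPsi I i) = ⊤ from h]; trivial
      exact this
    · refine hp ((Ideal.prod_le_inf.trans (Finset.inf_le (Finset.mem_univ i))).trans ?_)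
      intro x hx
      have : (⟨x, hx⟩ : I i) ∈ Submodule.comap (I i).subtype p := by
        rw [show Submodule.comap (I i).subtype p = ⊤ from h]; trivial
      exact this
  obtain ⟨U, hU1, hU2, hU⟩ := wfc_open (S1 ∪ S2) hfin htop
  refine ⟨U, hU1, hU2, fun x hx hxU => ⟨?_, ?_⟩⟩
  · refine wfc_superficial I M i x hx fun P hP hJ hmem => ?_
    exact hU _ hxU _ (Or.inl ⟨P, ⟨hP, hJ⟩, rfl⟩) hmem
  · obtain ⟨c, hc⟩ := wfc_filterReg M (∏ i, I i) x fun p hp hJ hmem =>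
      hU _ hxU _ (Or.inr ⟨p, ⟨hp, hJ⟩, rfl⟩) hmem
    intro m hm
    refine (le_iSup (fun n : ℕ => Submodule.torsionBySet A M
      (((∏ i, I i) ^ n : Ideal A) : Set A)) c) ?_
    rw [Submodule.mem_torsionBySet_iff]
    rintro ⟨b, hb⟩
    exact hc m hm b hb
end

section
/- Let (A, m) be a noetherian local ring with infinite residue field, M a finitely generated A-module with dim M = d > 0, and I_1, ..., I_s ideals of A. Set h = max{ ht((I_j + Ann_A M)/Ann_A M) : j = 1, ..., s }. Then there exists a Rees superficial sequence x_1, ..., x_h of (I_1, ..., I_s) with respect to M which is a part of a system of parameters for M. -/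
open IsLocalRing

open IsLocalRing

/-- Finitely supported families of elements of `M` indexed by `ℕ^s`, on which the polynomial
ring in the variables `σ` acts: the variable `v` multiplies by `val v` and shifts the degree
by the unit vector at `deg v`. -/
def RF {A σ : Type*} {s : ℕ} (_val : σ → A) (_deg : σ → Fin s) (M : Type*) [AddCommGroup M] :=
  (Fin s → ℕ) →₀ M

namespace RF

variable {A σ : Type*} [CommRing A] {s : ℕ} (val : σ → A) (deg : σ → Fin s)
  (M : Type*) [AddCommGroup M] [Module A M]

noncomputable instance : AddCommGroup (RF val deg M) :=
  inferInstanceAs (AddCommGroup ((Fin s → ℕ) →₀ M))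

noncomputable instance : Module A (RF val deg M) :=
  inferInstanceAs (Module A ((Fin s → ℕ) →₀ M))

/-- the element concentrated in degree `n` -/
noncomputable def sg (n : Fin s → ℕ) : M →ₗ[A] RF val deg M := Finsupp.lsingle n

/-- the component in degree `n` -/
noncomputable def cp (n : Fin s → ℕ) : RF val deg M →ₗ[A] M := Finsupp.lapply n

/-- degree shift -/
noncomputable def shift (e : Fin s → ℕ) : RF val deg M →ₗ[A] RF val deg M :=
  Finsupp.lmapDomain M A (fun n => n + e)

variable {M}

lemma shift_sg (e n : Fin s → ℕ) (m : M) :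
    shift val deg M e (sg val deg M n m) = sg val deg M (n + e) m := by
  simp only [shift, sg]
  exact Finsupp.mapDomain_single

lemma hom_ext' {P : Type*} [AddCommGroup P] [Module A P] {f g : RF val deg M →ₗ[A] P}
    (h : ∀ n m, f (sg val deg M n m) = g (sg val deg M n m)) : f = g :=
  Finsupp.lhom_ext h

lemma cp_sg_same (n : Fin s → ℕ) (m : M) : cp val deg M n (sg val deg M n m) = m :=
  Finsupp.single_eq_same

lemma cp_sg_ne {n n' : Fin s → ℕ} (h : n ≠ n') (m : M) :
    cp val deg M n' (sg val deg M n m) = 0 :=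
  Finsupp.single_eq_of_ne' h

lemma sum_sg (f : RF val deg M) :
    ∃ t : Finset (Fin s → ℕ), f = ∑ n ∈ t, sg val deg M n (cp val deg M n f) ∧
      ∀ n ∉ t, cp val deg M n f = 0 :=
  ⟨Finsupp.support f, (Finsupp.sum_single f).symm, fun _ hn => Finsupp.notMem_support_iff.mp hn⟩

variable (M)

/-- the action of monomials -/
noncomputable def monHom : Multiplicative (σ →₀ ℕ) →* Module.End A (RF val deg M) where
  toFun μ := ((Multiplicative.toAdd μ).prod fun v k => val v ^ k) •
    shift val deg M ((Multiplicative.toAdd μ).sum fun v k => k • Pi.single (deg v) 1)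
  map_one' := by
    apply hom_ext'
    intro n m
    simp [shift_sg]
  map_mul' μ ν := by
    apply hom_ext'
    intro n m
    rw [toAdd_mul, Finsupp.prod_add_index' (by simp) (by intros; rw [pow_add]),
      Finsupp.sum_add_index' (by simp) (by intros; rw [add_smul])]
    simp only [LinearMap.smul_apply, Module.End.mul_apply, shift_sg, map_smul, mul_smul]
    rw [add_assoc, add_comm (Finsupp.sum (Multiplicative.toAdd μ) _), smul_comm]

/-- the action of polynomials -/
noncomputable def act : MvPolynomial σ A →ₐ[A] Module.End A (RF val deg M) :=
  AddMonoidAlgebra.lift A _ _ (monHom val deg M)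

noncomputable instance : Module (MvPolynomial σ A) (RF val deg M) :=
  Module.compHom (RF val deg M) (act val deg M).toRingHom

variable {M}

lemma smul_def' (q : MvPolynomial σ A) (f : RF val deg M) : q • f = act val deg M q f := rfl

instance : IsScalarTower A (MvPolynomial σ A) (RF val deg M) where
  smul_assoc a q f := by
    rw [smul_def', smul_def', map_smul]; rfl

lemma X_smul_sg (v : σ) (n : Fin s → ℕ) (m : M) :
    (MvPolynomial.X v : MvPolynomial σ A) • sg val deg M n m =
      sg val deg M (n + Pi.single (deg v) 1) (val v • m) := by
  rw [smul_def']
  have : act val deg M (MvPolynomial.X v) = monHom val deg M (Multiplicative.ofAdd (Finsupp.single v 1)) := by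
    unfold act
    have := AddMonoidAlgebra.lift_single (monHom val deg M) (Finsupp.single v 1) (1 : A)
    rw [one_smul] at this
    exact this
  rw [this]
  simp [monHom, shift_sg]

end RF

namespace RF

variable {A σ : Type*} [CommRing A] {s : ℕ} (val : σ → A) (deg : σ → Fin s)
  {M : Type*} [AddCommGroup M] [Module A M]

/-- families compatible with multiplication -/
def IsMult (V : (Fin s → ℕ) → Submodule A M) : Prop :=
  ∀ v n z, z ∈ V n → val v • z ∈ V (n + Pi.single (deg v) 1)

/-- the homogeneous submodule attached to a family -/
noncomputable def FV (V : (Fin s → ℕ) → Submodule A M) (hV : IsMult val deg V) :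
    Submodule (MvPolynomial σ A) (RF val deg M) where
  carrier := {f | ∀ n, cp val deg M n f ∈ V n}
  add_mem' ha hb n := by rw [map_add]; exact add_mem (ha n) (hb n)
  zero_mem' n := by simp
  smul_mem' q f hf := by
    induction q using MvPolynomial.induction_on with
    | C a =>
      intro n
      have : (MvPolynomial.C a : MvPolynomial σ A) • f = a • f := by
        rw [← MvPolynomial.algebraMap_eq, algebraMap_smul]
      rw [this, map_smul]
      exact (V n).smul_mem _ (hf n)
    | add p q hp hq => intro n; rw [add_smul, map_add]; exact add_mem (hp n) (hq n)
    | mul_X p v hp =>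
      clear hf
      intro n
      rw [mul_comm, mul_smul]
      generalize p • f = g at hp
      obtain ⟨t, ht, -⟩ := sum_sg val deg g
      rw [ht, Finset.smul_sum, map_sum]
      refine sum_mem fun k _ => ?_
      rw [X_smul_sg]
      by_cases hk : k + Pi.single (deg v) 1 = n
      · subst hk
        rw [cp_sg_same]
        exact hV _ _ _ (hp k)
      · rw [cp_sg_ne _ _ hk]
        exact zero_mem _

variable {val deg}

lemma mem_FV {V : (Fin s → ℕ) → Submodule A M} {hV : IsMult val deg V} {f : RF val deg M} :
    f ∈ FV val deg V hV ↔ ∀ n, cp val deg M n f ∈ V n := Iff.rfl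

lemma sg_mem_FV {V : (Fin s → ℕ) → Submodule A M} {hV : IsMult val deg V} {n : Fin s → ℕ}
    {z : M} : sg val deg M n z ∈ FV val deg V hV ↔ z ∈ V n := by
  rw [mem_FV]
  constructor
  · intro h
    simpa [cp_sg_same] using h n
  · intro h k
    by_cases hk : n = k
    · subst hk; rwa [cp_sg_same]
    · rw [cp_sg_ne _ _ hk]; exact zero_mem _

lemma ind {p : (Fin s → ℕ) → Prop} (h0 : p 0) (h1 : ∀ n j, p n → p (n + Pi.single j 1)) :
    ∀ n, p n := by
  intro n
  induction hk : ∑ j, n j generalizing n with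
  | zero =>
    have : n = 0 := by
      funext j
      have := (Finset.sum_eq_zero_iff.mp hk) j (Finset.mem_univ _)
      simpa using this
    rwa [this]
  | succ k ih =>
    have : ∃ j, n j ≠ 0 := by
      by_contra! hc
      simp [hc] at hk
    obtain ⟨j, hj⟩ := this
    have hle : Pi.single j 1 ≤ n := by
      intro l
      by_cases hl : l = j
      · subst hl; simp; omega
      · simp [Pi.single_eq_of_ne hl]
    have he : n - Pi.single j 1 + Pi.single j 1 = n := tsub_add_cancel_of_le hle
    rw [← he]
    apply h1
    apply ih
    rw [← he] at hk
    simp only [Pi.add_apply, Finset.sum_add_distrib] at hk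
    rw [Finset.sum_pi_single'] at hk
    simpa using hk

/-- products of powers -/
noncomputable def PP (I : Fin s → Ideal A) (n : Fin s → ℕ) : Ideal A := ∏ j, I j ^ n j

lemma PP_zero (I : Fin s → Ideal A) : PP I 0 = ⊤ := by simp [PP]

lemma PP_add (I : Fin s → Ideal A) (m n : Fin s → ℕ) : PP I (m + n) = PP I m * PP I n := by
  simp [PP, pow_add, Finset.prod_mul_distrib]

lemma PP_single (I : Fin s → Ideal A) (j : Fin s) (k : ℕ) : PP I (Pi.single j k) = I j ^ k := by
  unfold PP
  rw [Finset.prod_eq_single j]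
  · simp
  · intro b _ hb; simp [Pi.single_eq_of_ne hb]
  · simp

lemma PP_anti (I : Fin s → Ideal A) {m n : Fin s → ℕ} (h : m ≤ n) : PP I n ≤ PP I m := by
  obtain ⟨k, rfl⟩ := le_iff_exists_add.mp h
  rw [PP_add]
  exact Ideal.mul_le_left

lemma PPM_anti (I : Fin s → Ideal A) {m n : Fin s → ℕ} (h : m ≤ n) (N : Submodule A M) :
    PP I n • N ≤ PP I m • N := Submodule.smul_mono_left (PP_anti I h)

variable {I : Fin s → Ideal A}

lemma isMult_of_le (hI : ∀ v, val v ∈ I (deg v)) {V : (Fin s → ℕ) → Submodule A M}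
    (h : ∀ l n, I l • V n ≤ V (n + Pi.single l 1)) : IsMult val deg V :=
  fun v n _ hz => h (deg v) n (Submodule.smul_mem_smul (hI v) hz)

lemma le_of_isMult (hI : ∀ l, I l ≤ Ideal.span (val '' {v | deg v = l}))
    {V : (Fin s → ℕ) → Submodule A M}
    (h : IsMult val deg V) (l n) : I l • V n ≤ V (n + Pi.single l 1) := by
  refine (Submodule.smul_mono_left (hI l)).trans ?_
  rw [Submodule.smul_le]
  intro r hr z hz
  induction hr using Submodule.span_induction with
  | mem x hx =>
    obtain ⟨v, hv, rfl⟩ := hx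
    obtain rfl : deg v = l := hv
    exact h v n z hz
  | zero => simp
  | add x y _ _ hx hy => rw [add_smul]; exact add_mem hx hy
  | smul a x _ hx => rw [smul_assoc]; exact Submodule.smul_mem _ _ hx

lemma isMult_PP (hI : ∀ v, val v ∈ I (deg v)) (e : Fin s → ℕ) :
    IsMult val deg (fun n => PP I (n + e) • (⊤ : Submodule A M)) := by
  apply isMult_of_le hI
  intro l n
  rw [← mul_smul, add_right_comm, PP_add _ _ (Pi.single l 1), PP_single, pow_one, mul_comm]

lemma PP_le_of_isMult (hI : ∀ l, I l ≤ Ideal.span (val '' {v | deg v = l}))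
    {V : (Fin s → ℕ) → Submodule A M}
    (h : IsMult val deg V) (h0 : V 0 = ⊤) (n) : PP I n • (⊤ : Submodule A M) ≤ V n := by
  induction n using ind with
  | h0 => rw [h0]; exact le_top
  | h1 n j ih =>
    rw [PP_add, PP_single, pow_one, mul_comm, mul_smul]
    exact (Submodule.smul_mono le_rfl ih).trans (le_of_isMult hI h j n)

/-- The Rees module -/
noncomputable def RM (M : Type*) [AddCommGroup M] [Module A M] (hI : ∀ v, val v ∈ I (deg v)) :
    Submodule (MvPolynomial σ A) (RF val deg M) :=
  FV val deg (fun n => PP I (n + 0) • (⊤ : Submodule A M)) (isMult_PP hI 0)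

lemma RM_fg [Module.Finite A M] (hI : ∀ v, val v ∈ I (deg v))
    (hI' : ∀ l, I l ≤ Ideal.span (val '' {v | deg v = l})) : (RM M hI).FG := by
  obtain ⟨G, hG⟩ := Module.Finite.fg_top (R := A) (M := M)
  classical
  refine ⟨G.image (sg val deg M 0), ?_⟩
  apply le_antisymm
  · rw [Submodule.span_le]
    intro f hf
    simp only [Finset.coe_image, Set.mem_image] at hf
    obtain ⟨m, _, rfl⟩ := hf
    exact sg_mem_FV.mpr (by simp [PP_zero])
  · set Q := Submodule.span (MvPolynomial σ A)
      ((G.image (sg val deg M 0) : Finset (RF val deg M)) : Set (RF val deg M)) with hQ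
    have hU : IsMult val deg (fun n => (Q.restrictScalars A).comap (sg val deg M n)) := by
      intro v n z hz
      change sg val deg M n z ∈ Q at hz
      change sg val deg M _ _ ∈ Q
      rw [← X_smul_sg]
      exact Q.smul_mem _ hz
    have h0 : (Q.restrictScalars A).comap (sg val deg M 0) = ⊤ := by
      rw [eq_top_iff, ← hG, Submodule.span_le]
      intro m hm
      exact Submodule.subset_span (by simpa using ⟨m, hm, rfl⟩)
    intro f hf
    obtain ⟨t, ht, -⟩ := sum_sg val deg f
    rw [ht]
    refine sum_mem fun n _ => ?_
    have := hf n
    beta_reduce at this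
    rw [add_zero] at this
    exact PP_le_of_isMult hI' hU h0 n this

/-- homogeneous submodules of the Rees module are determined in bounded degrees -/
lemma exists_bound [IsNoetherianRing A] [Finite σ] [Module.Finite A M]
    (hI : ∀ v, val v ∈ I (deg v))
    (hI' : ∀ l, I l ≤ Ideal.span (val '' {v | deg v = l}))
    {V : (Fin s → ℕ) → Submodule A M} (hV : IsMult val deg V)
    (hVP : ∀ n, V n ≤ PP I n • (⊤ : Submodule A M)) :
    ∃ D : ℕ, ∀ W : (Fin s → ℕ) → Submodule A M, IsMult val deg W →
      (∀ n, (∀ l, n l ≤ D) → V n ≤ W n) → ∀ n, V n ≤ W n := by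
  have : IsNoetherian (MvPolynomial σ A) (RM M hI) := by
    have := RM_fg (M := M) hI hI'
    exact isNoetherian_of_fg_of_noetherian _ this
  have hle : FV val deg V hV ≤ RM M hI := fun f hf n => by
    beta_reduce; rw [add_zero]; exact hVP n (hf n)
  have hfg : (FV val deg V hV).FG := by
    have := isNoetherian_of_le hle
    exact Module.Finite.iff_fg.mp inferInstance
  obtain ⟨G, hG⟩ := hfg
  choose t ht ht' using sum_sg (A := A) (M := M) val deg
  classical
  refine ⟨(G.biUnion t).sup (fun n => Finset.univ.sup n), fun W hW h n z hz => ?_⟩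
  have : FV val deg V hV ≤ FV val deg W hW := by
    rw [← hG, Submodule.span_le]
    intro g hg k
    by_cases hk : k ∈ t g
    · apply h
      · intro l
        refine (Finset.le_sup (f := k) (Finset.mem_univ l)).trans ?_
        exact Finset.le_sup (f := fun n : Fin s → ℕ => Finset.univ.sup n)
          (Finset.mem_biUnion.mpr ⟨g, hg, hk⟩)
      · have : g ∈ FV val deg V hV := hG ▸ Submodule.subset_span hg
        exact this k
    · rw [ht' g k hk]; exact zero_mem _
  exact sg_mem_FV.mp (this (sg_mem_FV.mpr hz))

end RF

namespace RF

lemma exists_avoid {A : Type*} [CommRing A] [IsLocalRing A] [Infinite (ResidueField A)]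
    {V : Type*} [AddCommGroup V] [Module A V] [Module.Finite A V]
    (T : Set (Submodule A V)) (hT : T.Finite) (h : ∀ W ∈ T, W ≠ ⊤) :
    ∃ v, ∀ W ∈ T, v ∉ W := by
  by_contra! hc
  have hcov : ⋃ W ∈ hT.toFinset, ((id W : Submodule A V) : Set V) = Set.univ := by
    rw [Set.eq_univ_iff_forall]
    intro v
    obtain ⟨W, hW, hv⟩ := hc v
    simp only [Set.mem_iUnion]
    exact ⟨W, by simpa using hW, hv⟩
  obtain ⟨W, hW, hfin⟩ := Submodule.exists_finiteIndex_of_cover hcov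
  obtain hW' | ⟨W', hW', hle⟩ := eq_top_or_exists_le_coatom W
  · exact h W (by simpa using hW) hW'
  have hs : IsSimpleModule A (V ⧸ W') := isSimpleModule_iff_isCoatom.mpr hW'
  obtain ⟨m, hm, ⟨e⟩⟩ := isSimpleModule_iff_quot_maximal.mp hs
  obtain rfl := IsLocalRing.eq_maximalIdeal hm
  have f1 : Finite (V ⧸ W) := by
    have hfin' : W.toAddSubgroup.FiniteIndex := hfin
    have := AddSubgroup.finite_quotient_of_finiteIndex (H := W.toAddSubgroup)
    exact this
  have f2 : Finite (V ⧸ W') :=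
    Finite.of_surjective (Submodule.factor hle) (Submodule.factor_surjective hle)
  have f3 : Finite (ResidueField A) := Finite.of_equiv _ e.toEquiv
  exact not_finite (ResidueField A)

lemma exists_pow_torsion {R G : Type*} [CommRing R] [IsNoetherianRing R] [AddCommGroup G]
    [Module R G] [Module.Finite R G] (y : R) (J : Ideal R)
    (h : ∀ P ∈ associatedPrimes R G, y ∈ P → J ≤ P) :
    ∃ p : ℕ, ∀ q ∈ J ^ p, ∀ g : G, y • g = 0 → q • g = 0 := by
  have hJ : J ≤ (Module.annihilator R (Submodule.torsionBy R G y)).radical := by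
    rw [← Ideal.sInf_minimalPrimes, le_sInf_iff]
    intro P hP
    have hPL := Module.associatedPrimes.minimalPrimes_annihilator_subset_associatedPrimes R (Submodule.torsionBy R G y) hP
    have hPG : P ∈ associatedPrimes R G :=
      IsAssociatedPrime.map_of_injective (Submodule.subtype _) hPL Subtype.val_injective
    apply h P hPG
    apply hP.1.2
    rw [Module.mem_annihilator]
    rintro ⟨g, hg⟩
    exact Subtype.ext hg
  obtain ⟨p, hp⟩ := Ideal.exists_pow_le_of_le_radical_of_fg hJ (IsNoetherian.noetherian _)
  refine ⟨p, fun q hq g hg => ?_⟩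
  have := Module.mem_annihilator.mp (hp hq) ⟨g, hg⟩
  exact congrArg Subtype.val this

variable {A σ : Type*} [CommRing A] {s : ℕ} {val : σ → A} {deg : σ → Fin s}
  {M : Type*} [AddCommGroup M] [Module A M] {I : Fin s → Ideal A}

lemma lift_pow (hI' : ∀ l, I l ≤ Ideal.span (val '' {v | deg v = l})) (i : Fin s) (p : ℕ) :
    ∀ g ∈ I i ^ p, ∃ q ∈ (Ideal.span (MvPolynomial.X '' {v : σ | deg v = i}) :
        Ideal (MvPolynomial σ A)) ^ p,
      ∀ n z, q • sg val deg M n z = sg val deg M (n + Pi.single i p) (g • z) := by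
  induction p with
  | zero =>
    intro g _
    refine ⟨MvPolynomial.C g, by simp, fun n z => ?_⟩
    rw [← MvPolynomial.algebraMap_eq, algebraMap_smul]
    simp
  | succ p ih =>
    intro g hg
    rw [pow_succ] at hg
    induction hg using Submodule.mul_induction_on' with
    | mem_mul_mem a ha b hb =>
      obtain ⟨q, hq, hq'⟩ := ih a ha
      have hb' := hI' i hb
      have : ∃ r ∈ (Ideal.span (MvPolynomial.X '' {v : σ | deg v = i}) :
          Ideal (MvPolynomial σ A)),
          ∀ n z, r • sg val deg M n z = sg val deg M (n + Pi.single i 1) (b • z) := by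
        clear hb
        induction hb' using Submodule.span_induction with
        | mem x hx =>
          obtain ⟨v, hv, rfl⟩ := hx
          obtain rfl : deg v = i := hv
          exact ⟨MvPolynomial.X v, Ideal.subset_span ⟨v, rfl, rfl⟩, fun n z => X_smul_sg ..⟩
        | zero => exact ⟨0, zero_mem _, fun n z => by simp⟩
        | add x y _ _ hx hy =>
          obtain ⟨r, hr, hr'⟩ := hx
          obtain ⟨t, ht, ht'⟩ := hy
          exact ⟨r + t, add_mem hr ht, fun n z => by rw [add_smul, hr', ht', add_smul, map_add]⟩
        | smul a x _ hx =>
          obtain ⟨r, hr, hr'⟩ := hx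
          refine ⟨MvPolynomial.C a * r, Ideal.mul_mem_left _ _ hr, fun n z => ?_⟩
          rw [mul_smul, hr', ← MvPolynomial.algebraMap_eq, algebraMap_smul, smul_assoc]
          simp only [map_smul]
      obtain ⟨r, hr, hr'⟩ := this
      refine ⟨q * r, by rw [pow_succ]; exact Ideal.mul_mem_mul hq hr, fun n z => ?_⟩
      rw [mul_smul, hr', hq', add_assoc, ← Pi.single_add, add_comm 1 p, mul_smul]
    | add x _ y _ hx hy =>
      obtain ⟨r, hr, hr'⟩ := hx
      obtain ⟨t, ht, ht'⟩ := hy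
      exact ⟨r + t, add_mem hr ht, fun n z => by rw [add_smul, hr', ht', add_smul, map_add]⟩

lemma exists_elt [IsNoetherianRing A] [IsLocalRing A] [Infinite (ResidueField A)]
    [Fintype σ] [Module.Finite A M]
    (hI : ∀ v, val v ∈ I (deg v))
    (hI' : ∀ l, I l ≤ Ideal.span (val '' {v | deg v = l})) (i : Fin s)
    (T : Set (Ideal A)) (hT : T.Finite) (hTi : ∀ P ∈ T, ¬ I i ≤ P) :
    ∃ x ∈ I i, (∀ P ∈ T, x ∉ P) ∧ ∀ j, ∃ p : ℕ, ∀ n (z : M), z ∈ PP I n • (⊤ : Submodule A M) →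
      x • z ∈ PP I (n + Pi.single i 1 + Pi.single j 1) • (⊤ : Submodule A M) →
      ∀ g ∈ I i ^ p, g • z ∈ PP I (n + Pi.single i p + Pi.single j 1) • (⊤ : Submodule A M) := by
  classical
  have hN : Module.Finite (MvPolynomial σ A) (RM M hI) := Module.Finite.iff_fg.mpr (RM_fg hI hI')
  let Nj (j : Fin s) := FV val deg
    (fun n => PP I (n + Pi.single j 1) • (⊤ : Submodule A M)) (isMult_PP hI (Pi.single j 1))
  let G (j : Fin s) := (RM M hI) ⧸ (Nj j).comap (RM M hI).subtype
  let J : Ideal (MvPolynomial σ A) := Ideal.span (MvPolynomial.X '' {v : σ | deg v = i})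
  let lx : (σ → A) →ₗ[A] A := Fintype.linearCombination A (fun v => if deg v = i then val v else 0)
  let ly : (σ → A) →ₗ[A] MvPolynomial σ A := Fintype.linearCombination A
    (fun v => if deg v = i then MvPolynomial.X v else 0)
  let T1 : Set (Submodule A (σ → A)) := (fun P : Ideal A => Submodule.comap lx P) '' T
  let T2 : Set (Submodule A (σ → A)) :=
    (fun P : Ideal (MvPolynomial σ A) => Submodule.comap ly (P.restrictScalars A)) ''
      {P | P ∈ ⋃ j, associatedPrimes (MvPolynomial σ A) (G j) ∧ ¬ J ≤ P}
  have h1 : T1.Finite := hT.image _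
  have h2 : T2.Finite := by
    apply Set.Finite.image
    apply Set.Finite.subset (s := ⋃ j, associatedPrimes (MvPolynomial σ A) (G j))
    · exact Set.finite_iUnion fun j => associatedPrimes.finite _ _
    · exact fun P hP => hP.1
  obtain ⟨a, ha⟩ := exists_avoid (T1 ∪ T2) (h1.union h2) (by
    rintro W (⟨P, hP, rfl⟩ | ⟨P, ⟨-, hP⟩, rfl⟩) htop
    · apply hTi P hP
      refine (hI' i).trans ?_
      rw [Ideal.span_le]
      rintro _ ⟨v, hv, rfl⟩
      have hv' : deg v = i := hv
      have : (Pi.single v 1 : σ → A) ∈ Submodule.comap lx P := by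
        have h3 : Submodule.comap lx P = ⊤ := htop
        rw [h3]; trivial
      simpa [lx, Fintype.linearCombination_apply_single, hv'] using this
    · apply hP
      rw [Ideal.span_le]
      rintro _ ⟨v, hv, rfl⟩
      have hv' : deg v = i := hv
      have : (Pi.single v 1 : σ → A) ∈ Submodule.comap ly (P.restrictScalars A) := by
        have h3 : Submodule.comap ly (P.restrictScalars A) = ⊤ := htop
        rw [h3]; trivial
      simpa [ly, Fintype.linearCombination_apply_single, hv'] using this)
  have hy : ∀ n (z : M), ly a • sg val deg M n z = sg val deg M (n + Pi.single i 1) (lx a • z) := by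
    intro n z
    simp only [ly, lx, Fintype.linearCombination_apply, Finset.sum_smul, map_sum]
    refine Finset.sum_congr rfl fun v _ => ?_
    split_ifs with hv
    · subst hv
      rw [smul_assoc, X_smul_sg, smul_assoc]
      simp only [map_smul]
    · simp
  refine ⟨lx a, ?_, ?_, ?_⟩
  · simp only [lx, Fintype.linearCombination_apply]
    refine sum_mem fun v _ => ?_
    split_ifs with hv
    · subst hv
      exact Ideal.mul_mem_left _ _ (hI v)
    · simp
  · intro P hP hx
    exact ha _ (Or.inl ⟨P, hP, rfl⟩) hx
  · intro j
    obtain ⟨p, hp⟩ := exists_pow_torsion (G := G j) (ly a) J (by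
      intro P hP hya
      by_contra hJ
      exact ha _ (Or.inr ⟨P, ⟨Set.mem_iUnion.mpr ⟨j, hP⟩, hJ⟩, rfl⟩) hya)
    refine ⟨p, fun n z hz hxz g hg => ?_⟩
    obtain ⟨q, hq, hq'⟩ := lift_pow (M := M) hI' i p g hg
    have hmem : sg val deg M n z ∈ RM M hI := sg_mem_FV.mpr (by simpa using hz)
    have := hp q hq (Submodule.Quotient.mk ⟨sg val deg M n z, hmem⟩) (by
      rw [← Submodule.Quotient.mk_smul, Submodule.Quotient.mk_eq_zero, Submodule.mem_comap]
      change ly a • sg val deg M n z ∈ Nj j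
      rw [hy]
      exact sg_mem_FV.mpr hxz)
    rw [← Submodule.Quotient.mk_smul, Submodule.Quotient.mk_eq_zero, Submodule.mem_comap] at this
    change q • sg val deg M n z ∈ Nj j at this
    rw [hq'] at this
    exact sg_mem_FV.mp this

end RF

namespace RF

variable {A : Type*} [CommRing A] {s : ℕ} 
  {M : Type*} [AddCommGroup M] [Module A M] {I : Fin s → Ideal A}

lemma exists_gens [IsNoetherianRing A] (I : Fin s → Ideal A) :
    ∃ (σ : Type) (_ : Fintype σ) (val : σ → A) (deg : σ → Fin s), (∀ v, val v ∈ I (deg v)) ∧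
      ∀ l, I l ≤ Ideal.span (val '' {v | deg v = l}) := by
  have h : ∀ l, ∃ (k : ℕ) (g : Fin k → A), Ideal.span (Set.range g) = I l := by
    intro l
    exact Submodule.fg_iff_exists_fin_generating_family.mp (IsNoetherian.noetherian (I l))
  choose k g hg using h
  refine ⟨Σ l, Fin (k l), inferInstance, fun v => g v.1 v.2, fun v => v.1, ?_, ?_⟩
  · rintro ⟨l, r⟩
    have : g l r ∈ Ideal.span (Set.range (g l)) := Ideal.subset_span ⟨r, rfl⟩
    rwa [hg] at this
  · intro l
    rw [← hg l]
    apply Ideal.span_mono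
    rintro _ ⟨r, rfl⟩
    exact ⟨⟨l, r⟩, rfl, rfl⟩

lemma climb {i : Fin s} {x : A} {c : ℕ}
    (hc : ∀ j n (z : M), c ≤ n i → z ∈ PP I n • (⊤ : Submodule A M) →
      x • z ∈ PP I (n + Pi.single i 1 + Pi.single j 1) • (⊤ : Submodule A M) →
      z ∈ PP I (n + Pi.single j 1) • (⊤ : Submodule A M))
    (z : M) (b k : Fin s → ℕ) (hb : c ≤ b i) (hz : z ∈ PP I b • (⊤ : Submodule A M))
    (hxz : x • z ∈ PP I (b + k + Pi.single i 1) • (⊤ : Submodule A M)) :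
    z ∈ PP I (b + k) • (⊤ : Submodule A M) := by
  induction k using ind with
  | h0 => simpa using hz
  | h1 n j ih =>
    have h1 : z ∈ PP I (b + n) • (⊤ : Submodule A M) := by
      apply ih
      refine PPM_anti I ?_ _ hxz
      intro l
      simp only [Pi.add_apply]
      omega
    rw [← add_assoc]
    apply hc j (b + n) z _ h1
    · convert hxz using 2
      congr 1
      abel
    · simp only [Pi.add_apply]; omega

lemma mem_span_singleton_smul {x : A} {N : Submodule A M} {w : M} :
    w ∈ Ideal.span {x} • N ↔ ∃ z ∈ N, x • z = w := by
  rw [Submodule.ideal_span_singleton_smul, Submodule.mem_smul_pointwise_iff_exists]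

lemma exists_rees [IsNoetherianRing A] [IsLocalRing A] [Infinite (ResidueField A)]
    [Module.Finite A M] (I : Fin s → Ideal A) (i : Fin s)
    (T : Set (Ideal A)) (hT : T.Finite) (hTi : ∀ P ∈ T, ¬ I i ≤ P) :
    ∃ x, IsReesSuperficial A M I i x ∧ ∀ P ∈ T, x ∉ P := by
  obtain ⟨σ, _, val, deg, hI, hI'⟩ := exists_gens I
  obtain ⟨x, hxi, hxT, hx⟩ := exists_elt (M := M) hI hI' i T hT hTi
  refine ⟨x, ⟨hxi, ?_⟩, hxT⟩
  -- one step of climbing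
  have hc : ∀ j, ∃ c : ℕ, ∀ n (z : M), c ≤ n i → z ∈ PP I n • (⊤ : Submodule A M) →
      x • z ∈ PP I (n + Pi.single i 1 + Pi.single j 1) • (⊤ : Submodule A M) →
      z ∈ PP I (n + Pi.single j 1) • (⊤ : Submodule A M) := by
    intro j
    obtain ⟨p, hp⟩ := hx j
    let V : (Fin s → ℕ) → Submodule A M := fun n => (PP I n • (⊤ : Submodule A M)) ⊓
      (PP I (n + Pi.single i 1 + Pi.single j 1) • (⊤ : Submodule A M)).comap
        (LinearMap.lsmul A M x)
    have hV' : ∀ l n, I l • V n ≤ V (n + Pi.single l 1) := by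
      intro l n
      rw [Submodule.smul_le]
      rintro r hr z ⟨hz, hz'⟩
      refine ⟨?_, ?_⟩
      · have := Submodule.smul_mem_smul hr hz
        rwa [← mul_smul, mul_comm, ← pow_one (I l), ← PP_single I l 1, ← PP_add] at this
      · change x • z ∈ PP I (n + Pi.single i 1 + Pi.single j 1) • (⊤ : Submodule A M) at hz'
        change x • (r • z) ∈
          PP I (n + Pi.single l 1 + Pi.single i 1 + Pi.single j 1) • (⊤ : Submodule A M)
        have := Submodule.smul_mem_smul hr hz'
        rw [← mul_smul, mul_comm, ← pow_one (I l), ← PP_single I l 1, ← PP_add] at this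
        rw [smul_comm]
        convert this using 2
        congr 1
        abel
    have hVpow : ∀ l k n, I l ^ k • V n ≤ V (n + Pi.single l k) := by
      intro l k
      induction k with
      | zero => intro n; simp
      | succ k ih =>
        intro n
        rw [pow_succ', mul_smul]
        refine (Submodule.smul_mono le_rfl (ih n)).trans ((hV' _ _).trans ?_)
        rw [add_assoc, ← Pi.single_add]
    obtain ⟨D, hD⟩ := exists_bound (M := M) hI hI' (isMult_of_le hI hV') (fun n => inf_le_left)
    let W : (Fin s → ℕ) → Submodule A M := fun n =>
      I i ^ (n i - D) • V (Function.update n i (min (n i) D))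
    have hW : IsMult val deg W := by
      apply isMult_of_le hI
      intro l n
      simp only [W]
      by_cases hl : l = i
      · subst hl
        by_cases hn : n l < D
        · have e1 : n l - D = 0 := by omega
          have e2 : (n + Pi.single l 1 : Fin s → ℕ) l - D = 0 := by simp; omega
          rw [e1, e2]
          have e3 : Function.update n l (min (n l) D) = n := by
            rw [min_eq_left hn.le, Function.update_eq_self]
          have e4 : Function.update (n + Pi.single l 1 : Fin s → ℕ) l (min ((n + Pi.single l 1 : Fin s → ℕ) l) D) =
              n + Pi.single l 1 := by
            rw [min_eq_left, Function.update_eq_self]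
            simp; omega
          rw [e3, e4]
          simpa using hV' l n
        · have e1 : (n + Pi.single l 1 : Fin s → ℕ) l - D = (n l - D) + 1 := by simp; omega
          have e2 : Function.update (n + Pi.single l 1 : Fin s → ℕ) l (min ((n + Pi.single l 1 : Fin s → ℕ) l) D) =
              Function.update n l (min (n l) D) := by
            funext q
            by_cases hq : q = l
            · subst hq; simp; omega
            · simp [Function.update_of_ne hq, Pi.single_eq_of_ne hq]
          rw [e1, e2, ← mul_smul, ← pow_succ']
      · have e1 : (n + Pi.single l 1 : Fin s → ℕ) i = n i := by
          simp [Pi.single_eq_of_ne (Ne.symm hl)]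
        rw [e1]
        have e2 : Function.update (n + Pi.single l 1 : Fin s → ℕ) i (min (n i) D) =
            Function.update n i (min (n i) D) + Pi.single l 1 := by
          funext q
          by_cases hq : q = i
          · subst hq; simp [Pi.single_eq_of_ne (Ne.symm hl)]
          · simp [Function.update_of_ne hq]
        rw [e2, smul_comm]
        exact Submodule.smul_mono le_rfl (hV' _ _)
    have hVW := hD W hW (by
      intro n hn
      simp only [W]
      rw [min_eq_left (hn i), Function.update_eq_self, Nat.sub_eq_zero_of_le (hn i)]
      simp)
    refine ⟨D + p, fun n z hn hz hxz => ?_⟩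
    have hzW : z ∈ W n := hVW n ⟨hz, hxz⟩
    simp only [W] at hzW
    rw [min_eq_right (by omega)] at hzW
    have e1 : n i - D = p + (n i - D - p) := by omega
    rw [e1, pow_add, mul_smul] at hzW
    have h3 := Submodule.smul_mono (le_refl (I i ^ p)) (hVpow i (n i - D - p) _) hzW
    set n' := Function.update n i D + Pi.single i (n i - D - p) with hn'
    have e2 : n' + Pi.single i p = n := by
      funext q
      by_cases hq : q = i
      · subst hq; simp [hn']; omega
      · simp [hn', Function.update_of_ne hq, Pi.single_eq_of_ne hq]
    have h4 : I i ^ p • V n' ≤ PP I (n' + Pi.single i p + Pi.single j 1) • (⊤ : Submodule A M) := by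
      rw [Submodule.smul_le]
      rintro g hg w ⟨hw, hw'⟩
      exact hp n' w hw hw' g hg
    rw [e2] at h4
    exact h4 h3
  choose c' hc' using hc
  let c := Finset.univ.sup c'
  have hc : ∀ j n (z : M), c ≤ n i → z ∈ PP I n • (⊤ : Submodule A M) →
      x • z ∈ PP I (n + Pi.single i 1 + Pi.single j 1) • (⊤ : Submodule A M) →
      z ∈ PP I (n + Pi.single j 1) • (⊤ : Submodule A M) := fun j n z hn =>
    hc' j n z ((Finset.le_sup (Finset.mem_univ j)).trans hn)
  -- Artin-Rees
  have hAR : ∃ D : ℕ, ∀ n, (Ideal.span {x} • (⊤ : Submodule A M)) ⊓ (PP I n • (⊤ : Submodule A M)) ≤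
      Ideal.span {x} • (PP I (n - fun _ => D) • (⊤ : Submodule A M)) := by
    let V : (Fin s → ℕ) → Submodule A M := fun n =>
      (Ideal.span {x} • (⊤ : Submodule A M)) ⊓ (PP I n • (⊤ : Submodule A M))
    have hV : IsMult val deg V := by
      apply isMult_of_le hI
      intro l n
      rw [Submodule.smul_le]
      rintro r hr z ⟨hz, hz'⟩
      refine ⟨Submodule.smul_mem _ _ hz, ?_⟩
      have := Submodule.smul_mem_smul hr hz'
      rwa [← mul_smul, mul_comm, ← pow_one (I l), ← PP_single I l 1, ← PP_add] at this
    obtain ⟨D, hD⟩ := exists_bound (M := M) hI hI' hV (fun n => inf_le_right)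
    refine ⟨D, hD (fun n => Ideal.span {x} • (PP I (n - fun _ => D) • (⊤ : Submodule A M))) ?_ ?_⟩
    · apply isMult_of_le hI
      intro l n
      rw [smul_comm]
      apply Submodule.smul_mono le_rfl
      rw [← mul_smul, ← pow_one (I l), ← PP_single I l 1, mul_comm, ← PP_add]
      apply PPM_anti
      intro q
      simp only [Pi.sub_apply, Pi.add_apply]
      omega
    · intro n hn
      have : (n - fun _ => D) = 0 := by
        funext q
        simp [Nat.sub_eq_zero_of_le (hn q)]
      simp only [this, PP_zero]
      simp [V]
  obtain ⟨D, hD⟩ := hAR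
  refine ⟨c + D, fun n hn => ?_⟩
  have en : (∏ j, I j ^ (n j + if j = i then 1 else 0)) = PP I (n + Pi.single i 1) := by
    simp [PP, Pi.single_apply]
  rw [en]
  change _ = Ideal.span {x} • (PP I n • (⊤ : Submodule A M))
  apply le_antisymm
  · intro w hw
    obtain ⟨z, hz, rfl⟩ := mem_span_singleton_smul.mp (hD _ hw)
    refine mem_span_singleton_smul.mpr ⟨z, ?_, rfl⟩
    have hle : (n - fun _ => D) ≤ n := tsub_le_self
    have hz' : z ∈ PP I (n - fun _ => D) • (⊤ : Submodule A M) := by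
      refine PPM_anti I ?_ _ hz
      intro q
      simp only [Pi.sub_apply, Pi.add_apply]
      omega
    have := climb hc z (n - fun _ => D) (n - (n - fun _ => D)) (by simp; omega) hz' (by
      rw [add_tsub_cancel_of_le hle]
      exact hw.2)
    rwa [add_tsub_cancel_of_le hle] at this
  · refine le_inf (Submodule.smul_mono le_rfl le_top) ?_
    rw [PP_add, PP_single, pow_one, mul_comm, mul_smul]
    apply Submodule.smul_mono _ le_rfl
    rwa [Ideal.span_singleton_le_iff_mem]

end RF

section Assembly
namespace RF
open IsLocalRing

/-- Every prime of `A / Ann M` containing `K` has height at least `k`. -/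
def HtGe {A : Type*} [CommRing A] (a : Ideal A) (K : Ideal A) (k : ℕ) : Prop :=
  ∀ p : PrimeSpectrum (A ⧸ a), K.map (Ideal.Quotient.mk a) ≤ p.asIdeal → (k : ℕ∞) ≤ Order.height p

lemma step {A : Type*} [CommRing A] [IsNoetherianRing A] [IsLocalRing A]
    [Infinite (ResidueField A)] {M : Type*} [AddCommGroup M] [Module A M] [Module.Finite A M]
    (a K : Ideal A) (k : ℕ) (hK : HtGe a K k) {t : ℕ} (I : Fin t → Ideal A) (i : Fin t)
    (hi : (k : ℕ∞) < idealHeight (A ⧸ a) ((I i).map (Ideal.Quotient.mk a))) :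
    ∃ x, IsReesSuperficial A (M ⧸ (K • ⊤ : Submodule A M)) I i x ∧
      HtGe a (K ⊔ Ideal.span {x}) (k + 1) := by
  classical
  let π := Ideal.Quotient.mk a
  let S : Set (PrimeSpectrum (A ⧸ a)) := {p | K.map π ≤ p.asIdeal ∧ Order.height p = k}
  have hSmin : ∀ p ∈ S, p.asIdeal ∈ (K.map π).minimalPrimes := by
    intro p hp
    refine ⟨⟨p.2, hp.1⟩, ?_⟩
    rintro q ⟨hq, hKq⟩ hqp
    by_contra hne
    have hlt : (⟨q, hq⟩ : PrimeSpectrum (A ⧸ a)) < p := lt_of_le_not_ge hqp hne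
    have h2 := hK ⟨q, hq⟩ hKq
    have h3 : Order.height (⟨q, hq⟩ : PrimeSpectrum (A ⧸ a)) < Order.height p := by
      refine Order.height_strictMono hlt ?_
      refine lt_of_le_of_lt (Order.height_mono hlt.le) ?_
      rw [hp.2]; exact ENat.natCast_lt_top k
    rw [hp.2] at h3
    exact absurd h2 (not_le.mpr h3)
  have hSfin : S.Finite := by
    refine Set.Finite.of_finite_image (f := fun p => p.asIdeal)
      ((Ideal.finite_minimalPrimes_of_isNoetherianRing (A ⧸ a) (K.map π)).subset ?_) ?_
    · rintro _ ⟨p, hp, rfl⟩; exact hSmin p hp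
    · intro p _ q _ hpq; exact PrimeSpectrum.ext hpq
  obtain ⟨x, hx, hxT⟩ := exists_rees (M := M ⧸ (K • ⊤ : Submodule A M)) I i
    ((fun p : PrimeSpectrum (A ⧸ a) => p.asIdeal.comap π) '' S) (hSfin.image _) (by
      rintro _ ⟨p, hp, rfl⟩ hle
      have : idealHeight (A ⧸ a) ((I i).map π) ≤ Order.height p :=
        iInf₂_le p (Ideal.map_le_iff_le_comap.mpr hle)
      rw [hp.2] at this
      exact absurd this (not_le.mpr hi))
  refine ⟨x, hx, fun p hp => ?_⟩
  have hKp : K.map π ≤ p.asIdeal := (Ideal.map_mono le_sup_left).trans hp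
  have hxp : x ∈ p.asIdeal.comap π :=
    Ideal.map_le_iff_le_comap.mp hp
      (Ideal.mem_sup_right (Ideal.mem_span_singleton_self x))
  have hk := hK p hKp
  have hne : (k : ℕ∞) ≠ Order.height p := by
    intro he
    exact hxT _ ⟨p, ⟨hKp, he.symm⟩, rfl⟩ hxp
  have := lt_of_le_of_ne hk hne
  push_cast
  exact Order.add_one_le_of_lt this

lemma finiteLength {A : Type*} [CommRing A] [IsNoetherianRing A]
    {N : Type*} [AddCommGroup N] [Module A N] [Module.Finite A N] (b : Ideal A)
    (hb : ∀ r ∈ b, ∀ n : N, r • n = 0) (hmax : ∀ P : Ideal A, P.IsPrime → b ≤ P → P.IsMaximal) :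
    IsFiniteLength A N := by
  have hT : Module.IsTorsionBySet A N (b : Set A) := fun n r => hb r r.2 n
  letI : Module (A ⧸ b) N := hT.module
  haveI : IsScalarTower A (A ⧸ b) N := hT.isScalarTower
  haveI : Module.Finite (A ⧸ b) N := Module.Finite.of_restrictScalars_finite A (A ⧸ b) N
  haveI : Ring.KrullDimLE 0 (A ⧸ b) := by
    rw [Ring.krullDimLE_zero_iff]
    intro Q hQ
    have h1 : (Q.comap (Ideal.Quotient.mk b)).IsMaximal :=
      hmax _ inferInstance (by
        intro r hr
        rw [Ideal.mem_comap, Ideal.Quotient.eq_zero_iff_mem.mpr hr]; exact Q.zero_mem)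
    have := Ideal.map_eq_top_or_isMaximal_of_surjective (Ideal.Quotient.mk b)
      Ideal.Quotient.mk_surjective h1
    rw [Ideal.map_comap_of_surjective _ Ideal.Quotient.mk_surjective] at this
    exact this.resolve_left hQ.ne_top
  haveI : IsArtinianRing (A ⧸ b) := isArtinianRing_iff_isNoetherianRing_krullDimLE_zero.mpr
    ⟨inferInstance, inferInstance⟩
  haveI : IsArtinian (A ⧸ b) N := inferInstance
  rw [isFiniteLength_iff_isNoetherian_isArtinian]
  refine ⟨inferInstance, ?_⟩
  exact isArtinian_of_surjective_algebraMap (R := A ⧸ b) (S := A) Ideal.Quotient.mk_surjective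

end RF
end Assembly

/-- Proposition 2.6(i).  With
`h = max_j ht((I j + Ann_A M)/Ann_A M)`, there exists a Rees superficial sequence
`x 1, …, x h` of `(I 1, …, I s)` with respect to `M` which is part of a system of
parameters for `M`. -/
theorem exists_reesSuperficialSeq_part_of_sop
    (A : Type*) [CommRing A] [IsNoetherianRing A] [IsLocalRing A]
    [Infinite (ResidueField A)]
    (M : Type*) [AddCommGroup M] [Module A M] [Module.Finite A M]
    {s : ℕ} (I : Fin s → Ideal A)
    (d : ℕ) (hd : 0 < d) (hdim : modDim A M = (d : WithBot ℕ∞))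
    (h : ℕ)
    (hh : (h : ℕ∞) = Finset.univ.sup fun j =>
      idealHeight (A ⧸ Module.annihilator A M)
        (Ideal.map (Ideal.Quotient.mk (Module.annihilator A M)) (I j))) :
    ∃ (x : Fin h → A) (c : Fin h → Fin s),
      IsReesSuperficialSeq A M I x c ∧
      ∃ (y : Fin d → A) (f : Fin h ↪ Fin d),
        IsSOP A M y ∧ ∀ j, y (f j) = x j := by
  classical
  set a := Module.annihilator A M with ha
  let π := Ideal.Quotient.mk a
  have hdim' : ringKrullDim (A ⧸ a) = (d : WithBot ℕ∞) := hdim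
  haveI : Nontrivial (A ⧸ a) := by
    by_contra hcon
    rw [not_nontrivial_iff_subsingleton] at hcon
    rw [ringKrullDim_eq_bot_of_subsingleton] at hdim'
    exact absurd hdim'.symm (WithBot.coe_ne_bot (a := (d : ℕ∞)))
  haveI : IsLocalRing (A ⧸ a) :=
    IsLocalRing.of_surjective' (Ideal.Quotient.mk a) Ideal.Quotient.mk_surjective
  have hle : ∀ p : PrimeSpectrum (A ⧸ a), Order.height p ≤ d := by
    intro p
    have := Order.height_le_krullDim p
    have h2 : Order.krullDim (PrimeSpectrum (A ⧸ a)) = (d : WithBot ℕ∞) := hdim'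
    rw [h2] at this
    exact_mod_cast this
  have htop : ∀ p : PrimeSpectrum (A ⧸ a), p.asIdeal = maximalIdeal (A ⧸ a) →
      Order.height p = d := by
    intro p hp
    have h1 := IsLocalRing.maximalIdeal_height_eq_ringKrullDim (R := A ⧸ a)
    rw [hdim', ← hp, PrimeSpectrum.height_eq_orderHeight] at h1
    exact_mod_cast h1
  have hmap : ∀ p : PrimeSpectrum (A ⧸ a),
      (maximalIdeal A).map π ≤ p.asIdeal → p.asIdeal = maximalIdeal (A ⧸ a) := by
    intro p hp
    have h1 : maximalIdeal A ≤ p.asIdeal.comap π := Ideal.map_le_iff_le_comap.mp hp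
    have h2 : p.asIdeal.comap π = maximalIdeal A :=
      ((maximalIdeal.isMaximal A).eq_of_le (Ideal.IsPrime.ne_top inferInstance) h1).symm
    have h3 : (p.asIdeal.comap π).IsMaximal := h2 ▸ maximalIdeal.isMaximal A
    have h4 := Ideal.map_eq_top_or_isMaximal_of_surjective π Ideal.Quotient.mk_surjective h3
    rw [Ideal.map_comap_of_surjective _ Ideal.Quotient.mk_surjective] at h4
    exact IsLocalRing.eq_maximalIdeal (h4.resolve_left p.2.ne_top)
  have hmht : ∀ k < d, (k : ℕ∞) < idealHeight (A ⧸ a) ((maximalIdeal A).map π) := by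
    intro k hk
    refine lt_of_lt_of_le (b := (d : ℕ∞)) (by exact_mod_cast hk) ?_
    exact le_iInf₂ fun p hp => (htop p (hmap p hp)).ge
  -- the index attaining the maximum
  have hj : 0 < h → ∃ j : Fin s, idealHeight (A ⧸ a) ((I j).map π) = h := by
    intro hpos
    have hne : (Finset.univ : Finset (Fin s)).Nonempty := by
      rw [Finset.nonempty_iff_ne_empty]
      intro he
      rw [he] at hh
      simp at hh
      omega
    obtain ⟨j, -, hj⟩ := Finset.exists_mem_eq_sup Finset.univ hne (fun j =>
      idealHeight (A ⧸ a) ((I j).map π))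
    exact ⟨j, hj.symm.trans hh.symm⟩
  have hIj : ∀ j : Fin s, idealHeight (A ⧸ a) ((I j).map π) = h →
      I j ≤ maximalIdeal A ∧ h ≤ d := by
    intro j hj
    have hex : ∃ p : PrimeSpectrum (A ⧸ a), (I j).map π ≤ p.asIdeal := by
      by_contra hcon
      push Not at hcon
      have : idealHeight (A ⧸ a) ((I j).map π) = ⊤ := by
        unfold idealHeight
        simp [hcon]
      rw [this] at hj
      exact absurd hj.symm (ENat.natCast_ne_top h)
    obtain ⟨p, hp⟩ := hex
    refine ⟨(Ideal.map_le_iff_le_comap.mp hp).trans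
      (IsLocalRing.le_maximalIdeal (Ideal.IsPrime.ne_top inferInstance)), ?_⟩
    have : idealHeight (A ⧸ a) ((I j).map π) ≤ Order.height p := iInf₂_le p hp
    rw [hj] at this
    exact_mod_cast this.trans (hle p)
  have hhd : h ≤ d := by
    rcases Nat.eq_zero_or_pos h with h0 | h0
    · omega
    · obtain ⟨j, hj⟩ := hj h0
      exact (hIj j hj).2
  obtain ⟨c, hc⟩ : ∃ c : Fin h → Fin s, ∀ i, idealHeight (A ⧸ a) ((I (c i)).map π) = h :=
    ⟨fun i => (hj (i.pos)).choose, fun i => (hj i.pos).choose_spec⟩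
  have hstep : ∀ (k : ℕ) (J : Ideal A), ∃ x, k < d → RF.HtGe a J k →
      x ∈ maximalIdeal A ∧
      (∀ hk : k < h, IsReesSuperficial A (M ⧸ (J • ⊤ : Submodule A M)) I (c ⟨k, hk⟩) x) ∧
      RF.HtGe a (J ⊔ Ideal.span {x}) (k + 1) := by
    intro k J
    by_cases hkd : k < d
    swap
    · exact ⟨0, fun hc => absurd hc hkd⟩
    by_cases hP : RF.HtGe a J k
    swap
    · exact ⟨0, fun _ hc => absurd hc hP⟩
    by_cases hkh : k < h
    · obtain ⟨x, hx, hx'⟩ := RF.step (M := M) a J k hP I (c ⟨k, hkh⟩)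
        (by rw [show Ideal.map (Ideal.Quotient.mk a) (I (c ⟨k, hkh⟩)) = _ from rfl]
            refine lt_of_lt_of_eq ?_ (hc ⟨k, hkh⟩).symm
            exact_mod_cast hkh)
      exact ⟨x, fun _ _ => ⟨(hIj _ (hc ⟨k, hkh⟩)).1 hx.1, fun _ => hx, hx'⟩⟩
    · obtain ⟨x, hx, hx'⟩ := RF.step (M := M) a J k hP
        (fun _ : Fin 1 => maximalIdeal A) 0 (hmht k hkd)
      exact ⟨x, fun _ _ => ⟨hx.1, fun h' => absurd h' hkh, hx'⟩⟩
  choose g hg using hstep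
  let J : ℕ → Ideal A := fun k => Nat.rec ⊥ (fun k K => K ⊔ Ideal.span {g k K}) k
  have hJs : ∀ k, J (k + 1) = J k ⊔ Ideal.span {g k (J k)} := fun k => rfl
  let x : ℕ → A := fun k => g k (J k)
  have hJspan : ∀ k, J k = Ideal.span (x '' {j | j < k}) := by
    intro k
    induction k with
    | zero => simp [J]
    | succ k ih =>
      rw [hJs, ih, ← Ideal.span_union]
      congr 1
      have : {j | j < k + 1} = {j | j < k} ∪ {k} := by ext; simp; omega
      rw [this, Set.image_union, Set.image_singleton, ← ih]
  have hJP : ∀ k ≤ d, RF.HtGe a (J k) k := by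
    intro k
    induction k with
    | zero => intro _ p _; simp
    | succ k ih =>
      intro hk
      rw [hJs]
      exact (hg k (J k) hk (ih (by omega))).2.2
  refine ⟨fun i => x i, c, ?_, fun i => x i, Fin.castLEEmb hhd, ⟨?_, ?_, ?_⟩, fun j => rfl⟩
  · intro i
    have := (hg i (J i) (by omega) (hJP i (by omega))).2.1 i.2
    have he : Ideal.span ((fun i : Fin h => x i) '' {j : Fin h | (j : ℕ) < (i : ℕ)}) = J i := by
      rw [hJspan]
      congr 1
      ext z
      constructor
      · rintro ⟨j, hj, rfl⟩; exact ⟨j, hj, rfl⟩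
      · rintro ⟨j, hj, rfl⟩
        exact ⟨⟨j, lt_trans hj i.2⟩, hj, rfl⟩
    rw [he]
    exact this
  · exact hdim
  · intro j
    exact (hg j (J j) j.2 (hJP j j.2.le)).1
  · have he : Ideal.span (Set.range (fun i : Fin d => x i)) = J d := by
      rw [hJspan]
      congr 1
      ext z
      constructor
      · rintro ⟨j, rfl⟩; exact ⟨j, j.2, rfl⟩
      · rintro ⟨j, hj, rfl⟩; exact ⟨⟨j, hj⟩, rfl⟩
    rw [he]
    refine RF.finiteLength (J d ⊔ a) ?_ ?_
    · intro r hr n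
      induction n using Submodule.Quotient.induction_on with
      | H m =>
      rw [← Submodule.Quotient.mk_smul, Submodule.Quotient.mk_eq_zero]
      obtain ⟨u, hu, v, hv, rfl⟩ := Submodule.mem_sup.mp hr
      rw [add_smul, Module.mem_annihilator.mp hv m, add_zero]
      exact Submodule.smul_mem_smul hu trivial
    · intro P hP hle'
      have hprime : (P.map π).IsPrime :=
        Ideal.map_isPrime_of_surjective Ideal.Quotient.mk_surjective (by
          rw [Ideal.mk_ker]; exact le_sup_right.trans hle')
      let p : PrimeSpectrum (A ⧸ a) := ⟨P.map π, hprime⟩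
      have hcomap : p.asIdeal.comap π = P := by
        change (P.map π).comap π = P
        rw [Ideal.comap_map_of_surjective _ Ideal.Quotient.mk_surjective]
        refine sup_eq_left.mpr ?_
        change RingHom.ker π ≤ P
        rw [Ideal.mk_ker]; exact le_sup_right.trans hle'
      have hp := hJP d le_rfl p (Ideal.map_mono (le_sup_left.trans hle'))
      have hpm : p.asIdeal = maximalIdeal (A ⧸ a) := by
        by_contra hne
        let q : PrimeSpectrum (A ⧸ a) := ⟨maximalIdeal (A ⧸ a), inferInstance⟩
        have hlt : p < q := by
          refine lt_of_le_of_ne (IsLocalRing.le_maximalIdeal hprime.ne_top) ?_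
          intro h'
          exact hne (congrArg PrimeSpectrum.asIdeal h')
        have := Order.height_strictMono hlt (lt_of_le_of_lt (hle p) (ENat.natCast_lt_top d))
        exact absurd (hp.trans_lt this) (not_lt.mpr (hle q))
      rw [← hcomap, hpm]
      exact Ideal.comap_isMaximal_of_surjective π Ideal.Quotient.mk_surjective
end
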